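/- For every ε > 0 and every edge-probability function p = p(n) satisfying n·p(n) − ln n − ln ln n → ∞ as n → ∞, with high probability a graph G sampled from G(n,p), with degree sequence d, is d̃(np/100, ε)-resilient with respect to Hamiltonicity. That is, w.h.p. for every spanning subgraph H ⊆ G such that d_H(v) ≤ d_G(v) − 2 for every vertex v with d_G(v) < np/100, and d_H(v) ≤ (1/3 − ε)·d_G(v) for every other vertex v, the graph G − H contains a Hamilton cycle. -/

import Mathlib

open Filter Finset SimpleGraph
open scoped Classical

/-- The probability weight of a particular graph `G` on `[n]` under `G(n,p)`. -/
noncomputable def gnpWeight (n : ℕ) (p : ℝ) (G : SimpleGraph (Fin n)) : ℝ :=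
  p ^ G.edgeFinset.card * (1 - p) ^ (n.choose 2 - G.edgeFinset.card)

/-- The probability that a random graph `G ~ G(n,p)` satisfies the predicate `A`. -/
noncomputable def gnpProb (n : ℕ) (p : ℝ) (A : SimpleGraph (Fin n) → Prop) : ℝ :=
  ∑ G : SimpleGraph (Fin n), if A G then gnpWeight n p G else 0

/-- A sequence of graph properties holds with high probability in `G(n, p n)`. -/
def WHP (p : ℕ → ℝ) (A : ∀ n : ℕ, SimpleGraph (Fin n) → Prop) : Prop :=
  Tendsto (fun n => gnpProb n (p n) (A n)) atTop (nhds 1)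

/-- Number of edges of a graph. -/
noncomputable def edgeCount {V : Type*} [Fintype V] (G : SimpleGraph V) : ℕ :=
  G.edgeFinset.card

/-- Number of edges with both endpoints in `U`. -/
noncomputable def eIn {V : Type*} [Fintype V] (G : SimpleGraph V) (U : Finset V) : ℕ :=
  (G.edgeFinset.filter (fun e => ∀ v ∈ e, v ∈ U)).card

/-- Number of edges with one endpoint in `U` and the other in `Z` (for disjoint `U`, `Z`). -/
noncomputable def eBetween {V : Type*} [Fintype V] (G : SimpleGraph V) (U Z : Finset V) : ℕ :=
  ((U ×ˢ Z).filter (fun q => G.Adj q.1 q.2)).card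

/-- External neighbourhood of a vertex set. -/
noncomputable def extNbhd {V : Type*} [Fintype V] (G : SimpleGraph V) (U : Finset V) : Finset V :=
  Finset.univ.filter (fun v => v ∉ U ∧ ∃ u ∈ U, G.Adj u v)

/-- `G` is an `(R, f)`-expander: every set `U` with `|U| ≤ R` satisfies `|N(U)| ≥ f(|U|)·|U|`. -/
def IsExpander {V : Type*} [Fintype V] (G : SimpleGraph V) (R : ℝ) (f : ℕ → ℝ) : Prop :=
  ∀ U : Finset V, U.Nonempty → (U.card : ℝ) ≤ R →
    f U.card * U.card ≤ ((extNbhd G U).card : ℝ)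

/-- The expansion function `f_β` on `{1, …, ⌊β n₁⌋}`. -/
noncomputable def fBeta (β : ℝ) (n1 : ℕ) (t : ℕ) : ℝ :=
  if t = Nat.floor (β * n1) then 2 * (1 + 39 * β) / (3 * β)
  else if (t : ℝ) < (n1 : ℝ) ^ (0.1 : ℝ) then Real.log n1 ^ (0.8 : ℝ)
  else 11

/-- `G₁` is `(n₁, d, β)`-quasi-random. -/
def QuasiRandom {V : Type*} [Fintype V] (G1 : SimpleGraph V) (n1 : ℕ) (d β : ℝ) : Prop :=
  (∀ v : V, d / 150 ≤ (G1.degree v : ℝ)) ∧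
  (∀ U : Finset V, (U.card : ℝ) < (n1 : ℝ) ^ (0.11 : ℝ) * Real.log n1 →
    (eIn G1 U : ℝ) ≤ d ^ (0.13 : ℝ) * U.card) ∧
  (∀ U : Finset V, (U.card : ℝ) < 12 * β * n1 →
    (eIn G1 U : ℝ) ≤ 50 * β * d * U.card) ∧
  (∀ U Z : Finset V, Disjoint U Z → U.card = Nat.floor (β * n1) →
    Z.card = Nat.floor ((1 / 3 - 27 * β) * n1) →
    (n1 : ℝ) * Real.log (Real.log n1) ≤ (eBetween G1 U Z : ℝ))

/-- Longest path length in `G`. -/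
noncomputable def longestPath {V : Type*} [Fintype V] (G : SimpleGraph V) : ℕ :=
  sSup {l : ℕ | ∃ (u v : V) (q : G.Walk u v), q.IsPath ∧ q.length = l}

/-- `{u, v}` is a booster with respect to `Γ`. -/
def IsBooster {V : Type*} [Fintype V] (Γ : SimpleGraph V) (u v : V) : Prop :=
  u ≠ v ∧ ¬ Γ.Adj u v ∧
    ((Γ ⊔ fromEdgeSet {s(u, v)}).IsHamiltonian ∨
      longestPath Γ < longestPath (Γ ⊔ fromEdgeSet {s(u, v)}))

/-- The booster set `B_Γ(v)`. -/
noncomputable def boosterSet {V : Type*} [Fintype V] (Γ : SimpleGraph V) (v : V) : Finset V :=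
  Finset.univ.filter (fun w => IsBooster Γ v w)

/-- Membership in the family `𝓛(n, β)` with witnessing partition `V = V₁ ∪ D`. -/
def InFamilyL (n : ℕ) (β : ℝ) (G : SimpleGraph (Fin n)) (V1 D : Finset (Fin n)) : Prop :=
  Disjoint V1 D ∧ V1 ∪ D = Finset.univ ∧
  ((D.card : ℝ) ≤ (n : ℝ) ^ (0.09 : ℝ)) ∧
  (∀ u ∈ D, 2 ≤ (G.neighborFinset u ∩ V1).card) ∧
  (∀ u ∈ D, ∀ v ∈ D, ∀ q : G.Walk u v, q.IsPath → 0 < q.length →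
    2 * Real.log n / (3 * Real.log (Real.log n)) < (q.length : ℝ)) ∧
  (∀ u ∈ D, ∀ q : G.Walk u u, q.IsCycle →
    2 * Real.log n / (3 * Real.log (Real.log n)) < (q.length : ℝ)) ∧
  IsExpander (G.induce (V1 : Set (Fin n))) (β * V1.card) (fBeta β V1.card)

/-- The set `D_t(G)` of vertices of degree less than `t`. -/
noncomputable def lowDegSet (n : ℕ) (t : ℝ) (G : SimpleGraph (Fin n)) : Finset (Fin n) :=
  Finset.univ.filter (fun v => (G.degree v : ℝ) < t)



/-- All potential edges on `Fin n`. -/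
noncomputable def allE (n : ℕ) : Finset (Sym2 (Fin n)) := (⊤ : SimpleGraph (Fin n)).edgeFinset

lemma edge_subset_allE {n : ℕ} (G : SimpleGraph (Fin n)) : G.edgeFinset ⊆ allE n := by
  unfold allE
  exact edgeFinset_subset_edgeFinset.2 le_top

lemma card_allE (n : ℕ) : (allE n).card = n.choose 2 := by
  unfold allE
  have := SimpleGraph.card_edgeFinset_top_eq_card_choose_two (V := Fin n)
  simpa using this

lemma sum_graph_eq {n : ℕ} (F : Finset (Sym2 (Fin n)) → ℝ) :
    ∑ G : SimpleGraph (Fin n), F G.edgeFinset = ∑ T ∈ (allE n).powerset, F T := by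
  refine Finset.sum_bij (fun G _ => G.edgeFinset) ?_ ?_ ?_ ?_
  · intro G _
    exact Finset.mem_powerset.2 (edge_subset_allE G)
  · intro G _ G' _ h
    exact edgeFinset_inj.1 h
  · intro T hT
    refine ⟨fromEdgeSet (T : Set (Sym2 (Fin n))), Finset.mem_univ _, ?_⟩
    ext e
    have hT' := Finset.mem_powerset.1 hT
    simp only [mem_edgeFinset, edgeSet_fromEdgeSet, Set.mem_sdiff, Finset.mem_coe]
    constructor
    · exact fun h => h.1
    · intro h
      refine ⟨h, ?_⟩
      have := hT' h
      unfold allE at this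
      rw [mem_edgeFinset] at this
      simpa using this
  · intro G _
    rfl

lemma expect_prod (n : ℕ) (p : ℝ) (f g : Sym2 (Fin n) → ℝ) :
    ∑ G : SimpleGraph (Fin n), gnpWeight n p G *
      ((∏ e ∈ G.edgeFinset, f e) * ∏ e ∈ allE n \ G.edgeFinset, g e)
      = ∏ e ∈ allE n, (p * f e + (1 - p) * g e) := by
  rw [Finset.prod_add]
  rw [← sum_graph_eq (fun T => (∏ e ∈ T, p * f e) * ∏ e ∈ allE n \ T, (1 - p) * g e)]
  refine Finset.sum_congr rfl ?_
  intro G _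
  rw [Finset.prod_mul_distrib, Finset.prod_mul_distrib, Finset.prod_const, Finset.prod_const,
    Finset.card_sdiff_of_subset (edge_subset_allE G), card_allE]
  unfold gnpWeight
  ring

lemma gnpWeight_nonneg {n : ℕ} {p : ℝ} (h0 : 0 ≤ p) (h1 : p ≤ 1) (G : SimpleGraph (Fin n)) :
    0 ≤ gnpWeight n p G := by
  unfold gnpWeight
  have : 0 ≤ 1 - p := by linarith
  positivity

lemma sum_gnpWeight (n : ℕ) (p : ℝ) : ∑ G : SimpleGraph (Fin n), gnpWeight n p G = 1 := by
  have := expect_prod n p (fun _ => 1) (fun _ => 1)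
  simpa using this

lemma gnpProb_nonneg {n : ℕ} {p : ℝ} (h0 : 0 ≤ p) (h1 : p ≤ 1) (A : SimpleGraph (Fin n) → Prop) :
    0 ≤ gnpProb n p A := by
  unfold gnpProb
  refine Finset.sum_nonneg fun G _ => ?_
  split_ifs
  · exact gnpWeight_nonneg h0 h1 G
  · exact le_rfl

lemma gnpProb_compl (n : ℕ) (p : ℝ) (A : SimpleGraph (Fin n) → Prop) :
    gnpProb n p A = 1 - gnpProb n p (fun G => ¬ A G) := by
  rw [← sum_gnpWeight n p]
  unfold gnpProb
  rw [← Finset.sum_sub_distrib]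
  refine Finset.sum_congr rfl fun G _ => ?_
  by_cases h : A G <;> simp [h]

lemma gnpProb_mono {n : ℕ} {p : ℝ} (h0 : 0 ≤ p) (h1 : p ≤ 1) {A B : SimpleGraph (Fin n) → Prop}
    (h : ∀ G, A G → B G) : gnpProb n p A ≤ gnpProb n p B := by
  unfold gnpProb
  refine Finset.sum_le_sum fun G _ => ?_
  have := gnpWeight_nonneg h0 h1 G
  by_cases hA : A G
  · simp [hA, h G hA]
  · by_cases hB : B G <;> simp [hA, hB, this]

lemma gnpProb_or {n : ℕ} {p : ℝ} (h0 : 0 ≤ p) (h1 : p ≤ 1) (A B : SimpleGraph (Fin n) → Prop) :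
    gnpProb n p (fun G => A G ∨ B G) ≤ gnpProb n p A + gnpProb n p B := by
  unfold gnpProb
  rw [← Finset.sum_add_distrib]
  refine Finset.sum_le_sum fun G _ => ?_
  have := gnpWeight_nonneg h0 h1 G
  by_cases hA : A G <;> by_cases hB : B G <;> simp [hA, hB, this]

lemma gnpProb_union {n : ℕ} {p : ℝ} (h0 : 0 ≤ p) (h1 : p ≤ 1) {ι : Type*} (s : Finset ι)
    (A : ι → SimpleGraph (Fin n) → Prop) :
    gnpProb n p (fun G => ∃ i ∈ s, A i G) ≤ ∑ i ∈ s, gnpProb n p (A i) := by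
  unfold gnpProb
  rw [Finset.sum_comm]
  refine Finset.sum_le_sum fun G _ => ?_
  have hw := gnpWeight_nonneg h0 h1 G
  split_ifs with h
  · obtain ⟨i, hi, hA⟩ := h
    refine le_trans ?_ (Finset.single_le_sum (f := fun i => if A i G then gnpWeight n p G else 0)
      (fun j _ => ?_) hi)
    · simp [hA]
    · split_ifs
      · exact hw
      · exact le_rfl
  · refine Finset.sum_nonneg fun j _ => ?_
    split_ifs
    · exact hw
    · exact le_rfl

/-- The master exponential-moment bound. -/
lemma master {n : ℕ} {p : ℝ} (h0 : 0 ≤ p) (h1 : p ≤ 1) (Γ : Finset (Sym2 (Fin n)))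
    (hΓ : Γ ⊆ allE n) (c : Sym2 (Fin n) → ℝ) (lam κ a : ℝ) (hc0 : ∀ e ∈ Γ, c e = 0)
    (hκ : ∀ e, κ * c e ≤ 1 - Real.exp (-(lam * c e))) :
    gnpProb n p (fun G => Γ ⊆ G.edgeFinset ∧ 0 ≤ lam * (a - ∑ e ∈ G.edgeFinset, c e))
      ≤ p ^ Γ.card * Real.exp (lam * a - p * κ * ∑ e ∈ allE n, c e) := by
  set f : Sym2 (Fin n) → ℝ := fun e => Real.exp (-(lam * c e)) with hf
  set g : Sym2 (Fin n) → ℝ := fun e => if e ∈ Γ then 0 else 1 with hg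
  have step1 : gnpProb n p (fun G => Γ ⊆ G.edgeFinset ∧ 0 ≤ lam * (a - ∑ e ∈ G.edgeFinset, c e))
      ≤ Real.exp (lam * a) * ∑ G : SimpleGraph (Fin n), gnpWeight n p G *
      ((∏ e ∈ G.edgeFinset, f e) * ∏ e ∈ allE n \ G.edgeFinset, g e) := by
    unfold gnpProb
    rw [Finset.mul_sum]
    refine Finset.sum_le_sum fun G _ => ?_
    have hw := gnpWeight_nonneg h0 h1 G
    have hgn : ∀ e, 0 ≤ g e := by
      intro e; simp only [hg]; split_ifs <;> norm_num
    have hfn : ∀ e, 0 ≤ f e := fun e => (Real.exp_pos _).le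
    split_ifs with h
    · obtain ⟨hs, hl⟩ := h
      have hg1 : ∏ e ∈ allE n \ G.edgeFinset, g e = 1 := by
        refine Finset.prod_eq_one fun e he => ?_
        have : e ∉ Γ := fun h' => (Finset.mem_sdiff.1 he).2 (hs h')
        simp [hg, this]
      have hf1 : ∏ e ∈ G.edgeFinset, f e = Real.exp (-(lam * ∑ e ∈ G.edgeFinset, c e)) := by
        rw [hf, ← Real.exp_sum, Finset.sum_neg_distrib, Finset.mul_sum]
      rw [hg1, hf1, mul_one, mul_left_comm, ← Real.exp_add]
      refine le_mul_of_one_le_right hw ?_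
      rw [Real.one_le_exp_iff]
      linarith
    · have := Finset.prod_nonneg (s := G.edgeFinset) (fun e _ => hfn e)
      have := Finset.prod_nonneg (s := allE n \ G.edgeFinset) (fun e _ => hgn e)
      positivity
  rw [expect_prod] at step1
  refine step1.trans ?_
  have hsplit : ∏ e ∈ allE n, (p * f e + (1 - p) * g e)
      = (∏ e ∈ allE n \ Γ, (p * f e + (1 - p) * g e)) * ∏ e ∈ Γ, (p * f e + (1 - p) * g e) :=
    (Finset.prod_sdiff hΓ).symm
  have hΓp : ∏ e ∈ Γ, (p * f e + (1 - p) * g e) = p ^ Γ.card := by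
    rw [← Finset.prod_const]
    refine Finset.prod_congr rfl fun e he => ?_
    simp [hf, hg, he, hc0 e he]
  have hrest : ∏ e ∈ allE n \ Γ, (p * f e + (1 - p) * g e)
      ≤ Real.exp (- (p * κ * ∑ e ∈ allE n, c e)) := by
    have hs : ∑ e ∈ allE n, c e = ∑ e ∈ allE n \ Γ, c e := by
      rw [← Finset.sum_sdiff hΓ, Finset.sum_eq_zero hc0, add_zero]
    rw [hs, Finset.mul_sum, ← Finset.sum_neg_distrib, Real.exp_sum]
    refine Finset.prod_le_prod (fun e he => ?_) (fun e he => ?_)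
    · have : e ∉ Γ := (Finset.mem_sdiff.1 he).2
      have h3 : 0 ≤ f e := (Real.exp_pos _).le
      have h4 : 0 ≤ 1 - p := by linarith
      simp only [hg, this, if_false]
      positivity
    · have : e ∉ Γ := (Finset.mem_sdiff.1 he).2
      simp only [hg, this, if_false, mul_one]
      have h5 := Real.add_one_le_exp (-(p * κ * c e))
      have h6 := mul_le_mul_of_nonneg_left (hκ e) h0
      simp only [hf]
      nlinarith
  rw [hsplit, hΓp, sub_eq_add_neg (lam * a), Real.exp_add]
  have hp : 0 ≤ p ^ Γ.card := pow_nonneg h0 _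
  calc _ ≤ Real.exp (lam * a) * (Real.exp (- (p * κ * ∑ e ∈ allE n, c e)) * p ^ Γ.card) := by
        gcongr
    _ = _ := by ring

/-- Number of pairs in `S` adjacent in `G`. -/
noncomputable def cnt {n : ℕ} (G : SimpleGraph (Fin n)) (S : Finset (Fin n × Fin n)) : ℕ :=
  (S.filter (fun q => G.Adj q.1 q.2)).card

/-- multiplicity of an edge in a set of ordered pairs -/
noncomputable def mult {n : ℕ} (S : Finset (Fin n × Fin n)) (e : Sym2 (Fin n)) : ℕ :=
  (S.filter (fun q => s(q.1, q.2) = e)).card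

lemma sum_mult {n : ℕ} (G : SimpleGraph (Fin n)) (S : Finset (Fin n × Fin n)) :
    ∑ e ∈ G.edgeFinset, (mult S e : ℝ) = cnt G S := by
  unfold cnt
  have h := Finset.card_eq_sum_card_fiberwise (s := S.filter (fun q => G.Adj q.1 q.2))
    (t := G.edgeFinset) (f := fun q => s(q.1, q.2)) (by
      intro q hq
      simp only [Finset.coe_filter, Set.mem_ofPred_eq] at hq
      simp [hq.2])
  rw [h]
  push_cast
  refine Finset.sum_congr rfl fun e he => ?_
  unfold mult
  congr 2
  ext q
  simp only [Finset.mem_filter]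
  constructor
  · rintro ⟨h1, h2⟩
    refine ⟨⟨h1, ?_⟩, h2⟩
    rw [← h2, mem_edgeFinset, mem_edgeSet] at he
    exact he
  · rintro ⟨⟨h1, _⟩, h2⟩
    exact ⟨h1, h2⟩

lemma cnt_full {n : ℕ} (G : SimpleGraph (Fin n)) (S : Finset (Fin n × Fin n))
    (h : ∀ q ∈ S, G.Adj q.1 q.2) : cnt G S = S.card := by
  unfold cnt
  rw [Finset.filter_eq_self.2 h]

lemma sum_mult_all {n : ℕ} (S : Finset (Fin n × Fin n)) (hS : ∀ q ∈ S, q.1 ≠ q.2) :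
    ∑ e ∈ allE n, (mult S e : ℝ) = S.card := by
  have := sum_mult (⊤ : SimpleGraph (Fin n)) S
  have h2 := cnt_full (⊤ : SimpleGraph (Fin n)) S (fun q hq => hS q hq)
  rw [h2] at this
  rw [← this]
  refine Finset.sum_congr ?_ fun _ _ => rfl
  unfold allE
  ext e
  simp only [mem_edgeFinset]

lemma mult_le_two {n : ℕ} (S : Finset (Fin n × Fin n)) (e : Sym2 (Fin n)) : mult S e ≤ 2 := by
  induction e using Sym2.ind with
  | _ a b =>
  unfold mult
  refine (Finset.card_le_card (t := {(a, b), (b, a)}) ?_).trans Finset.card_le_two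
  intro q hq
  obtain ⟨x, y⟩ := q
  simp only [Finset.mem_filter, Sym2.eq_iff] at hq
  simp only [Finset.mem_insert, Finset.mem_singleton, Prod.mk.injEq]
  tauto

lemma kappa_two (lam : ℝ) (c : ℕ) (hc : c ≤ 2) :
    (1 - Real.exp (-(2 * lam))) / 2 * c ≤ 1 - Real.exp (-(lam * c)) := by
  interval_cases c
  · simp
  · have : Real.exp (-(2 * lam)) = Real.exp (-lam) ^ 2 := by
      rw [← Real.exp_nat_mul]; congr 1; push_cast; ring
    push_cast
    rw [this, mul_one, mul_one]
    nlinarith [sq_nonneg (1 - Real.exp (-lam))]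
  · have : lam * ((2 : ℕ) : ℝ) = 2 * lam := by push_cast; ring
    rw [this]; push_cast; linarith

lemma master_cnt {n : ℕ} {p : ℝ} (h0 : 0 ≤ p) (h1 : p ≤ 1) (Γ : Finset (Sym2 (Fin n)))
    (hΓ : Γ ⊆ allE n) (S : Finset (Fin n × Fin n)) (hS : ∀ q ∈ S, q.1 ≠ q.2)
    (hd : ∀ q ∈ S, s(q.1, q.2) ∉ Γ) (lam a : ℝ) :
    gnpProb n p (fun G => Γ ⊆ G.edgeFinset ∧ 0 ≤ lam * (a - cnt G S))
      ≤ p ^ Γ.card * Real.exp (lam * a - p * ((1 - Real.exp (-(2 * lam))) / 2) * S.card) := by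
  have := master h0 h1 Γ hΓ (fun e => (mult S e : ℝ)) lam ((1 - Real.exp (-(2 * lam))) / 2) a
    (fun e he => by
      unfold mult
      rw [Nat.cast_eq_zero, Finset.card_eq_zero, Finset.filter_eq_empty_iff]
      intro q hq h
      exact hd q hq (h ▸ he))
    (fun e => kappa_two lam _ (mult_le_two S e))
  rw [sum_mult_all S hS] at this
  simpa only [sum_mult] using this

/-- version for sets of pairs without repeated edges -/
lemma master_cnt_one {n : ℕ} {p : ℝ} (h0 : 0 ≤ p) (h1 : p ≤ 1) (Γ : Finset (Sym2 (Fin n)))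
    (hΓ : Γ ⊆ allE n) (S : Finset (Fin n × Fin n)) (hS : ∀ q ∈ S, q.1 ≠ q.2)
    (hd : ∀ q ∈ S, s(q.1, q.2) ∉ Γ) (hone : ∀ e, mult S e ≤ 1) (lam a : ℝ) :
    gnpProb n p (fun G => Γ ⊆ G.edgeFinset ∧ 0 ≤ lam * (a - cnt G S))
      ≤ p ^ Γ.card * Real.exp (lam * a - p * (1 - Real.exp (-lam)) * S.card) := by
  have := master h0 h1 Γ hΓ (fun e => (mult S e : ℝ)) lam (1 - Real.exp (-lam)) a
    (fun e he => by
      unfold mult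
      rw [Nat.cast_eq_zero, Finset.card_eq_zero, Finset.filter_eq_empty_iff]
      intro q hq h
      exact hd q hq (h ▸ he))
    (fun e => by
      have h := hone e
      interval_cases (mult S e) <;> simp)
  rw [sum_mult_all S hS] at this
  simpa only [sum_mult] using this

lemma tail_lower {n : ℕ} {p : ℝ} (h0 : 0 ≤ p) (h1 : p ≤ 1) (Γ : Finset (Sym2 (Fin n)))
    (hΓ : Γ ⊆ allE n) (S : Finset (Fin n × Fin n)) (hS : ∀ q ∈ S, q.1 ≠ q.2)
    (hd : ∀ q ∈ S, s(q.1, q.2) ∉ Γ) (η : ℝ) (hη : 0 < η) (hη1 : η ≤ 1) :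
    gnpProb n p (fun G => Γ ⊆ G.edgeFinset ∧ (cnt G S : ℝ) ≤ (1 - η) * (p * S.card))
      ≤ p ^ Γ.card * Real.exp (- (p * S.card * (η ^ 2 / 8))) := by
  refine (gnpProb_mono h0 h1 ?_).trans ((master_cnt h0 h1 Γ hΓ S hS hd (η / 4)
    ((1 - η) * (p * S.card))).trans ?_)
  · rintro G ⟨h2, h3⟩
    exact ⟨h2, mul_nonneg (by linarith) (by linarith)⟩
  · refine mul_le_mul_of_nonneg_left ?_ (pow_nonneg h0 _)
    rw [Real.exp_le_exp]
    have hx : η / 4 - 2 * (η / 4) ^ 2 ≤ (1 - Real.exp (-(2 * (η / 4)))) / 2 := by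
      have hb := Real.abs_exp_sub_one_sub_id_le (x := -(2 * (η / 4))) (by
        rw [abs_le]; constructor <;> linarith)
      have := (abs_le.1 hb).2
      nlinarith
    have hps : 0 ≤ p * S.card := by positivity
    nlinarith [mul_le_mul_of_nonneg_left hx hps]

lemma tail_upper_gen {n : ℕ} {p : ℝ} (h0 : 0 ≤ p) (h1 : p ≤ 1)
    (S : Finset (Fin n × Fin n)) (hS : ∀ q ∈ S, q.1 ≠ q.2) (lam a : ℝ) (hl : 0 ≤ lam) :
    gnpProb n p (fun G => a ≤ (cnt G S : ℝ))
      ≤ Real.exp (- (lam * a) + p * S.card * ((Real.exp (2 * lam) - 1) / 2)) := by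
  refine (gnpProb_mono h0 h1 ?_).trans ((master_cnt h0 h1 ∅ (by simp) S hS (by simp) (-lam)
    a).trans ?_)
  · intro G h3
    exact ⟨by simp, by nlinarith⟩
  · rw [Finset.card_empty, pow_zero, one_mul, Real.exp_le_exp]
    have : -(2 * -lam) = 2 * lam := by ring
    rw [this]
    linarith

lemma tail_upper {n : ℕ} {p : ℝ} (h0 : 0 ≤ p) (h1 : p ≤ 1)
    (S : Finset (Fin n × Fin n)) (hS : ∀ q ∈ S, q.1 ≠ q.2) (η : ℝ) (hη : 0 < η) (hη1 : η ≤ 1) :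
    gnpProb n p (fun G => (1 + η) * (p * S.card) ≤ (cnt G S : ℝ))
      ≤ Real.exp (- (p * S.card * (η ^ 2 / 8))) := by
  refine (tail_upper_gen h0 h1 S hS (η / 4) _ (by linarith)).trans ?_
  rw [Real.exp_le_exp]
  have hx : (Real.exp (2 * (η / 4)) - 1) / 2 ≤ η / 4 + 2 * (η / 4) ^ 2 := by
    have hb := Real.abs_exp_sub_one_sub_id_le (x := 2 * (η / 4)) (by
      rw [abs_le]; constructor <;> linarith)
    have := (abs_le.1 hb).2
    nlinarith
  have hps : 0 ≤ p * S.card := by positivity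
  nlinarith [mul_le_mul_of_nonneg_left hx hps]


/-- A list which is a path in the graph. -/
def PathL {n : ℕ} (Γ : SimpleGraph (Fin n)) (l : List (Fin n)) : Prop :=
  l.IsChain Γ.Adj ∧ l.Nodup

/-- A longest path. -/
def LongL {n : ℕ} (Γ : SimpleGraph (Fin n)) (l : List (Fin n)) : Prop :=
  PathL Γ l ∧ ∀ l', PathL Γ l' → l'.length ≤ l.length

/-- `b` directly follows `a` in `l`. -/
def Nx {α : Type*} (l : List α) (a b : α) : Prop := ∃ s t, l = s ++ a :: b :: t

/-- `a` and `b` are consecutive in `l`. -/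
def Nb {α : Type*} (l : List α) (a b : α) : Prop := Nx l a b ∨ Nx l b a

section lists
variable {α : Type*}

lemma Nx_right_unique {l : List α} (hl : l.Nodup) {a b c : α} (h1 : Nx l a b) (h2 : Nx l a c) :
    b = c := by
  obtain ⟨s, t, rfl⟩ := h1
  obtain ⟨s', t', h⟩ := h2
  have h3 : a ∉ s ∧ a ∉ b :: t := by
    rw [List.nodup_append] at hl
    obtain ⟨_, h5, h6⟩ := hl
    refine ⟨fun h => h6 a h a (by simp) rfl, (List.nodup_cons.1 h5).1⟩
  have := (List.append_cons_inj_of_notMem (a₁ := a) (a₂ := a) h3.1 h3.2).1 h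
  simp at this
  exact this.2.1

lemma Nx_reverse {l : List α} {a b : α} : Nx l.reverse a b ↔ Nx l b a := by
  constructor
  · rintro ⟨s, t, h⟩
    refine ⟨t.reverse, s.reverse, ?_⟩
    rw [← List.reverse_reverse l, h]
    simp
  · rintro ⟨s, t, h⟩
    refine ⟨t.reverse, s.reverse, ?_⟩
    rw [h]
    simp

lemma Nx_left_unique {l : List α} (hl : l.Nodup) {a b c : α} (h1 : Nx l a c) (h2 : Nx l b c) :
    a = b :=
  Nx_right_unique (List.nodup_reverse.2 hl) (Nx_reverse.2 h1) (Nx_reverse.2 h2)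

lemma not_Nx_head {l : List α} (hl : l.Nodup) {a x : α} (hx : l.head? = some x) : ¬ Nx l a x := by
  rintro ⟨s, t, rfl⟩
  cases s with
  | nil => simp at hx; subst hx; simp at hl
  | cons y s => simp at hx; subst hx; simp at hl

lemma not_Nx_last {l : List α} (hl : l.Nodup) {a x : α} (hx : l.getLast? = some x) : ¬ Nx l x a := by
  intro h
  refine not_Nx_head (l := l.reverse) (List.nodup_reverse.2 hl) (x := x) (a := a) (by simpa using hx)
    (Nx_reverse.2 h)

lemma exists_pred {l : List α} {x w : α} (hx : l.head? = some x) (hw : w ∈ l) (h : w ≠ x) :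
    ∃ y, Nx l y w := by
  obtain ⟨s, t, rfl⟩ := List.append_of_mem hw
  rcases List.eq_nil_or_concat s with rfl | ⟨s', y, rfl⟩
  · simp at hx; exact absurd hx h
  · exact ⟨y, s', t, by simp⟩

lemma exists_succ {l : List α} {x w : α} (hx : l.getLast? = some x) (hw : w ∈ l) (h : w ≠ x) :
    ∃ y, Nx l w y := by
  obtain ⟨y, hy⟩ := exists_pred (l := l.reverse) (x := x) (w := w) (by simpa using hx)
    (by simpa using hw) h
  exact ⟨y, Nx_reverse.1 hy⟩

lemma Nx_append_left {l s : List α} {a b : α} (h : Nx l a b) : Nx (l ++ s) a b := by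
  obtain ⟨u, v, rfl⟩ := h
  exact ⟨u, v ++ s, by simp⟩

lemma Nx_append_right {l s : List α} {a b : α} (h : Nx l a b) : Nx (s ++ l) a b := by
  obtain ⟨u, v, rfl⟩ := h
  exact ⟨s ++ u, v, by simp⟩

lemma Nx_split {s t : List α} {y w a b : α} (h : Nx (s ++ y :: w :: t) a b) :
    Nx (s ++ [y]) a b ∨ Nx (w :: t) a b ∨ (a = y ∧ b = w) := by
  obtain ⟨u, v, h⟩ := h
  have h' : (s ++ [y]) ++ (w :: t) = (u ++ [a]) ++ (b :: v) := by simpa using h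
  rcases List.append_eq_append_iff.1 h' with ⟨as, h1, h2⟩ | ⟨bs, h1, h2⟩
  · rcases List.eq_nil_or_concat as with rfl | ⟨as', c, rfl⟩
    · right; right
      have h3 : u = s ∧ a = y := by simpa using h1
      have h4 : w = b ∧ t = v := by simpa using h2
      exact ⟨h3.2, h4.1.symm⟩
    · right; left
      refine ⟨as', v, ?_⟩
      have h3 : u = s ++ [y] ++ as' ∧ a = c := by
        have : u ++ [a] = (s ++ [y] ++ as') ++ [c] := by simpa using h1
        simpa using List.append_inj' this rfl
      rw [h2, h3.2]
      simp
  · cases bs with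
    | nil =>
      right; right
      have h3 : s = u ∧ y = a := by simpa using h1
      have h4 : b = w ∧ v = t := by simpa using h2
      exact ⟨h3.2.symm, h4.1⟩
    | cons c bs =>
      left
      simp only [List.cons_append, List.cons.injEq] at h2
      refine ⟨u, bs, ?_⟩
      rw [h1, h2.1]
      simp

lemma card_rel_le {V : Type*} [Fintype V] (X : Finset V) (R : V → V → Prop)
    (h : ∀ x w w', R x w → R x w' → w = w') :
    (Finset.univ.filter (fun w => ∃ x ∈ X, R x w)).card ≤ X.card := by
  have hch : ∀ w ∈ Finset.univ.filter (fun w => ∃ x ∈ X, R x w), ∃ x, x ∈ X ∧ R x w := by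
    intro w hw
    obtain ⟨x, hx⟩ := (Finset.mem_filter.1 hw).2
    exact ⟨x, hx⟩
  choose! f hf using hch
  refine Finset.card_le_card_of_injOn f (fun w hw => (hf w hw).1) ?_
  intro w hw w' hw' hww
  have h1 := (hf w hw).2
  have h2 := (hf w' hw').2
  rw [hww] at h1
  exact h _ _ _ h1 h2

/-- list-neighbours of a set -/
noncomputable def nbL {V : Type*} [Fintype V] (l : List V) (X : Finset V) : Finset V :=
  Finset.univ.filter (fun w => ∃ x ∈ X, Nb l x w)

lemma mem_nbL {V : Type*} [Fintype V] {l : List V} {X : Finset V} {w : V} :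
    w ∈ nbL l X ↔ ∃ x ∈ X, Nb l x w := by
  unfold nbL; simp

lemma mem_extNbhd {V : Type*} [Fintype V] {G : SimpleGraph V} {U : Finset V} {v : V} :
    v ∈ extNbhd G U ↔ v ∉ U ∧ ∃ u ∈ U, G.Adj u v := by
  unfold extNbhd; simp

lemma card_nbL_le {V : Type*} [Fintype V] {l : List V} (hl : l.Nodup) (X : Finset V) :
    (nbL l X).card ≤ 2 * X.card := by
  have h1 := card_rel_le X (fun x w => Nx l x w) (fun x w w' => Nx_right_unique hl)
  have h2 := card_rel_le X (fun x w => Nx l w x) (fun x w w' => Nx_left_unique hl)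
  have : nbL l X ⊆ (Finset.univ.filter (fun w => ∃ x ∈ X, Nx l x w)) ∪
      (Finset.univ.filter (fun w => ∃ x ∈ X, Nx l w x)) := by
    intro w hw
    obtain ⟨x, hx, h⟩ := (Finset.mem_filter.1 hw).2
    rcases h with h | h
    · exact Finset.mem_union_left _ (Finset.mem_filter.2 ⟨Finset.mem_univ _, x, hx, h⟩)
    · exact Finset.mem_union_right _ (Finset.mem_filter.2 ⟨Finset.mem_univ _, x, hx, h⟩)
  have := (Finset.card_le_card this).trans (Finset.card_union_le _ _)
  omega

lemma card_nbL_lt {V : Type*} [Fintype V] {l : List V} (hl : l.Nodup) (X : Finset V) {x0 : V}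
    (hx0 : l.head? = some x0) (hX : x0 ∈ X) : (nbL l X).card < 2 * X.card := by
  have h1 := card_rel_le X (fun x w => Nx l x w) (fun x w w' => Nx_right_unique hl)
  have h2 := card_rel_le (X.erase x0) (fun x w => Nx l w x) (fun x w w' => Nx_left_unique hl)
  have : nbL l X ⊆ (Finset.univ.filter (fun w => ∃ x ∈ X, Nx l x w)) ∪
      (Finset.univ.filter (fun w => ∃ x ∈ X.erase x0, Nx l w x)) := by
    intro w hw
    obtain ⟨x, hx, h⟩ := (Finset.mem_filter.1 hw).2
    rcases h with h | h
    · exact Finset.mem_union_left _ (Finset.mem_filter.2 ⟨Finset.mem_univ _, x, hx, h⟩)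
    · refine Finset.mem_union_right _ (Finset.mem_filter.2 ⟨Finset.mem_univ _, x, ?_, h⟩)
      refine Finset.mem_erase.2 ⟨?_, hx⟩
      rintro rfl
      exact not_Nx_head hl hx0 h
  have := (Finset.card_le_card this).trans (Finset.card_union_le _ _)
  rw [Finset.card_erase_of_mem hX] at h2
  have : 0 < X.card := Finset.card_pos.2 ⟨_, hX⟩
  omega

end lists

/-- `u` is the head of a rotation of `l0` whose broken edges all touch `U`. -/
def Rot {n : ℕ} (Γ : SimpleGraph (Fin n)) (l0 : List (Fin n)) (U : Finset (Fin n))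
    (u : Fin n) : Prop :=
  ∃ l, PathL Γ l ∧ l.Perm l0 ∧ l.head? = some u ∧ l.getLast? = l0.getLast? ∧
    ∀ a b, Nx l0 a b → a ∉ U → b ∉ U → Nb l a b

lemma rot_step {n : ℕ} (Γ : SimpleGraph (Fin n)) {l0 : List (Fin n)} (h0 : PathL Γ l0)
    {x0 v0 : Fin n} (hx0 : l0.head? = some x0) (hv0 : l0.getLast? = some v0)
    {U : Finset (Fin n)} (hx0U : x0 ∈ U) {u w : Fin n} (hu : u ∈ U) (hrot : Rot Γ l0 U u)
    (huw : Γ.Adj u w) (hw : w ∈ l0) (hwU : w ∉ U) (hnb : w ∉ nbL l0 U) :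
    ∃ y, y ∉ U ∧ Nb l0 y w ∧ Rot Γ l0 (insert y U) y := by
  obtain ⟨l, ⟨hch, hnd⟩, hperm, hhead, hlast, hpres⟩ := hrot
  have hnbU : ∀ z, Nb l0 z w → z ∉ U := by
    intro z hz hzU
    exact hnb (mem_nbL.2 ⟨z, hzU, hz⟩)
  have hwl : w ∈ l := hperm.mem_iff.2 hw
  have hwu : w ≠ u := by rintro rfl; exact hwU hu
  obtain ⟨y, hy⟩ := exists_pred hhead hwl hwu
  have hwx0 : w ≠ x0 := by rintro rfl; exact hwU hx0U
  obtain ⟨z1, hz1⟩ := exists_pred hx0 hw hwx0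
  have hz1U := hnbU z1 (Or.inl hz1)
  have hz1l := hpres z1 w hz1 hz1U hwU
  -- `y` is an `l0`-neighbour of `w`
  have hyw : Nb l0 y w := by
    by_cases hwv : w = v0
    · subst hwv
      rcases hz1l with h | h
      · rw [Nx_left_unique hnd hy h]; exact Or.inl hz1
      · exact absurd h (not_Nx_last hnd (hlast.trans hv0))
    · obtain ⟨z2, hz2⟩ := exists_succ hv0 hw hwv
      have hz2U := hnbU z2 (Or.inr hz2)
      have hz2l := hpres w z2 hz2 hwU hz2U
      rcases hz1l with h | h
      · rw [Nx_left_unique hnd hy h]; exact Or.inl hz1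
      · rcases hz2l with h' | h'
        · exfalso
          have h12 := Nx_right_unique hnd h h'
          subst h12
          -- z1 precedes and follows w
          obtain ⟨s, t, hst⟩ := hz1
          rw [hst] at hz2
          have hnd0 := h0.2
          rw [hst] at hnd0
          obtain ⟨s', t', hst'⟩ := hz2
          have hsp := Nx_split (s := s) (t := t) (y := z1) (w := w) (a := w) (b := z1) ⟨s', t', hst'⟩
          rw [List.nodup_append] at hnd0
          obtain ⟨q1, q2, q3⟩ := hnd0
          rcases hsp with ⟨s2, t2, e⟩ | ⟨s2, t2, e⟩ | ⟨e, _⟩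
          · have : w ∈ s ++ [z1] := by rw [e]; simp
            rcases List.mem_append.1 this with h5 | h5
            · exact q3 w h5 w (by simp) rfl
            · simp at h5; subst h5; simp at q2
          · have : z1 ∈ w :: t := by rw [e]; simp
            exact (List.nodup_cons.1 q2).1 this
          · subst e; simp at q2
        · rw [Nx_left_unique hnd hy h']; exact Or.inr hz2
  have hyU : y ∉ U := hnbU y hyw
  refine ⟨y, hyU, hyw, ?_⟩
  obtain ⟨s, t, hst⟩ := hy
  have hs : ∃ s', s = u :: s' := by
    cases s with
    | nil =>
      rw [hst] at hhead; simp at hhead; subst hhead; exact absurd hu hyU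
    | cons c s => rw [hst] at hhead; simp at hhead; exact ⟨s, by rw [hhead]⟩
  obtain ⟨s', rfl⟩ := hs
  refine ⟨(u :: s' ++ [y]).reverse ++ w :: t, ⟨?_, ?_⟩, ?_, ?_, ?_, ?_⟩
  · rw [hst, List.isChain_append_cons_cons] at hch
    rw [List.isChain_append]
    refine ⟨?_, hch.2.2, ?_⟩
    · rw [List.isChain_reverse]
      exact hch.1.imp fun a b h => h.symm
    · intro x hx z hz
      simp [-List.reverse_append, -List.cons_append, List.getLast?_reverse] at hx
      simp at hx hz
      subst hx; subst hz
      exact huw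
  · have : ((u :: s' ++ [y]).reverse ++ w :: t).Perm l := by
      rw [hst]
      refine ((List.reverse_perm _).append_right _).trans ?_
      simp
    exact this.nodup_iff.2 hnd
  · refine List.Perm.trans ?_ hperm
    rw [hst]
    refine ((List.reverse_perm _).append_right _).trans ?_
    simp
  · simp
  · rw [← hlast, hst]
    simp [List.getLast?_append, List.getLast?_cons]
  · intro a b hab ha hb
    have haU : a ∉ U := fun h => ha (Finset.mem_insert_of_mem h)
    have hbU : b ∉ U := fun h => hb (Finset.mem_insert_of_mem h)
    have hay : a ≠ y := by rintro rfl; exact ha (Finset.mem_insert_self _ _)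
    have hby : b ≠ y := by rintro rfl; exact hb (Finset.mem_insert_self _ _)
    have key : ∀ c d, c ≠ y → Nx l c d → Nb ((u :: s' ++ [y]).reverse ++ w :: t) c d := by
      intro c d hc h
      rw [hst] at h
      rcases Nx_split h with h | h | h
      · exact Or.inr (Nx_append_left (Nx_reverse.2 h))
      · exact Or.inl (Nx_append_right h)
      · exact absurd h.1 hc
    rcases hpres a b hab haU hbU with h | h
    · exact key a b hay h
    · exact (key b a hby h).symm

/-- Heads of longest paths with given last vertex. -/
noncomputable def endSet {n : ℕ} (Γ : SimpleGraph (Fin n)) (v : Fin n) : Finset (Fin n) :=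
  Finset.univ.filter (fun w => ∃ l, LongL Γ l ∧ l.head? = some w ∧ l.getLast? = some v)

lemma rot_mem_endSet {n : ℕ} {Γ : SimpleGraph (Fin n)} {l0 : List (Fin n)} (h0 : LongL Γ l0)
    {v0 : Fin n} (hv0 : l0.getLast? = some v0) {U : Finset (Fin n)} {u : Fin n}
    (h : Rot Γ l0 U u) : u ∈ endSet Γ v0 := by
  obtain ⟨l, h1, h2, h3, h4, _⟩ := h
  refine Finset.mem_filter.2 ⟨Finset.mem_univ _, l, ⟨h1, fun l' hl' => ?_⟩, h3, h4.trans hv0⟩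
  rw [h2.length_eq]
  exact h0.2 l' hl'

lemma rot_nbr_mem {n : ℕ} {Γ : SimpleGraph (Fin n)} {l0 : List (Fin n)} (h0 : LongL Γ l0)
    {U : Finset (Fin n)} {u w : Fin n} (h : Rot Γ l0 U u) (huw : Γ.Adj u w) : w ∈ l0 := by
  obtain ⟨l, h1, h2, h3, h4, _⟩ := h
  by_contra hw
  have hwl : w ∉ l := fun h => hw (h2.mem_iff.1 h)
  have := h0.2 (w :: l) ⟨by
    rw [List.isChain_cons]
    refine ⟨fun y hy => ?_, h1.1⟩
    rw [h3] at hy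
    simp at hy
    subst hy
    exact huw.symm, List.nodup_cons.2 ⟨hwl, h1.2⟩⟩
  rw [List.length_cons, h2.length_eq] at this
  omega

lemma rot_mono {n : ℕ} {Γ : SimpleGraph (Fin n)} {l0 : List (Fin n)}
    {U U' : Finset (Fin n)} (hU : U ⊆ U') {u : Fin n} (h : Rot Γ l0 U u) : Rot Γ l0 U' u := by
  obtain ⟨l, h1, h2, h3, h4, h5⟩ := h
  exact ⟨l, h1, h2, h3, h4, fun a b hab ha hb => h5 a b hab (fun h => ha (hU h)) (fun h => hb (hU h))⟩

lemma posa {n : ℕ} (Γ : SimpleGraph (Fin n)) {l0 : List (Fin n)} (h0 : LongL Γ l0)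
    {x0 v0 : Fin n} (hx0 : l0.head? = some x0) (hv0 : l0.getLast? = some v0)
    (m : ℕ) (hm : 1 ≤ m)
    (hexp : ∀ U : Finset (Fin n), U.Nonempty → U.card < m → 2 * U.card ≤ (extNbhd Γ U).card) :
    ∃ U : Finset (Fin n), U.card = m ∧ (extNbhd Γ U).card ≤ 2 * (endSet Γ v0).card := by
  have hgrow : ∀ j, 1 ≤ j → j ≤ m → ∃ U : Finset (Fin n), U.card = j ∧ x0 ∈ U ∧
      ∀ u ∈ U, Rot Γ l0 U u := by
    intro j hj
    induction j, hj using Nat.le_induction with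
    | base =>
      intro _
      refine ⟨{x0}, by simp, by simp, ?_⟩
      intro u hu
      rw [Finset.mem_singleton] at hu
      subst hu
      exact ⟨l0, h0.1, List.Perm.refl _, hx0, rfl, fun a b hab _ _ => Or.inl hab⟩
    | succ j hj ih =>
      intro hjm
      obtain ⟨U, hc, hxU, hU⟩ := ih (by omega)
      have h1 := hexp U ⟨_, hxU⟩ (by omega)
      have h2 := card_nbL_lt h0.1.2 U hx0 hxU
      obtain ⟨w, hw, hwn⟩ := Finset.exists_mem_notMem_of_card_lt_card (lt_of_lt_of_le h2 h1)
      obtain ⟨hwU, u, hu, huw⟩ := mem_extNbhd.1 hw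
      obtain ⟨y, hyU, _, hrot⟩ := rot_step Γ h0.1 hx0 hv0 hxU hu (hU u hu) huw
        (rot_nbr_mem h0 (hU u hu) huw) hwU hwn
      refine ⟨insert y U, by rw [Finset.card_insert_of_notMem hyU, hc],
        Finset.mem_insert_of_mem hxU, ?_⟩
      intro z hz
      rcases Finset.mem_insert.1 hz with rfl | hz
      · exact hrot
      · exact rot_mono (Finset.subset_insert _ _) (hU z hz)
  obtain ⟨U, hc, hxU, hU⟩ := hgrow m hm le_rfl
  refine ⟨U, hc, ?_⟩
  refine (Finset.card_le_card ?_).trans (card_nbL_le h0.1.2 (endSet Γ v0))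
  intro w hw
  obtain ⟨hwU, u, hu, huw⟩ := mem_extNbhd.1 hw
  by_cases hwn : w ∈ nbL l0 U
  · obtain ⟨z, hz, hzw⟩ := mem_nbL.1 hwn
    exact mem_nbL.2 ⟨z, rot_mem_endSet h0 hv0 (hU z hz), hzw⟩
  · obtain ⟨y, hyU, hyw, hrot⟩ := rot_step Γ h0.1 hx0 hv0 hxU hu (hU u hu) huw
        (rot_nbr_mem h0 (hU u hu) huw) hwU hwn
    exact mem_nbL.2 ⟨y, rot_mem_endSet h0 hv0 hrot, hyw⟩

lemma ham_of_list {n : ℕ} (hn : 3 ≤ n) (Γ : SimpleGraph (Fin n)) {l : List (Fin n)} (hl : PathL Γ l)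
    (hall : ∀ v, v ∈ l) {x v : Fin n} (hx : l.head? = some x) (hv : l.getLast? = some v)
    (hadj : Γ.Adj v x) : Γ.IsHamiltonian := by
  intro _
  have hne : l ≠ [] := by rintro rfl; simp at hx
  have hlen : l.length = n := by
    have h1 : l.toFinset = Finset.univ := by ext v; simp [hall]
    have := List.toFinset_card_of_nodup hl.2
    rw [h1] at this
    simpa using this.symm
  have hx' : l.head hne = x := by
    rw [List.head?_eq_some_head hne] at hx; simpa using hx
  have hv' : l.getLast hne = v := by
    rw [List.getLast?_eq_some_getLast hne] at hv; simpa using hv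
  have hadj' : Γ.Adj (l.getLast hne) (l.head hne) := by rw [hx', hv']; exact hadj
  set q := Walk.ofSupport l hne hl.1 with hq
  have hqs : q.support = l := Walk.support_ofSupport hne hl.1
  have hqp : q.IsPath := by rw [Walk.isPath_def, hqs]; exact hl.2
  refine ⟨_, Walk.cons hadj' q, ?_⟩
  rw [Walk.isHamiltonianCycle_isCycle_and_isHamiltonian_tail]
  have ht : (Walk.cons hadj' q).tail.support = l := by
    rw [Walk.support_tail_of_not_nil _ (by simp)]; simp [hqs]
  have htp : (Walk.cons hadj' q).tail.IsPath := by rw [Walk.isPath_def, ht]; exact hl.2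
  refine ⟨?_, htp.isHamiltonian_of_mem (by rw [ht]; exact hall)⟩
  rw [Walk.isCycle_iff_isPath_tail_and_le_length]
  refine ⟨htp, ?_⟩
  have : q.support.length = n := by rw [hqs, hlen]
  rw [Walk.length_support] at this
  rw [Walk.length_cons]
  omega

lemma booster {n : ℕ} (hn : 3 ≤ n) (Γ Γ' : SimpleGraph (Fin n)) (hle : Γ ≤ Γ')
    (hconn : ∀ Y : Finset (Fin n), Y.Nonempty → Y ≠ Finset.univ → ∃ a ∈ Y, ∃ b ∉ Y, Γ.Adj a b)
    {l : List (Fin n)} (hl : PathL Γ l)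
    {x v : Fin n} (hx : l.head? = some x) (hv : l.getLast? = some v)
    (hadj : Γ'.Adj v x) : Γ'.IsHamiltonian ∨ ∃ l', PathL Γ' l' ∧ l.length < l'.length := by
  by_cases hall : ∀ v, v ∈ l
  · left
    exact ham_of_list hn Γ' ⟨hl.1.imp fun a b h => hle h, hl.2⟩ hall hx hv hadj
  · right
    push Not at hall
    obtain ⟨z, hz⟩ := hall
    obtain ⟨a, ha, b, hb, hab⟩ := hconn l.toFinset ⟨x, by
      rw [List.mem_toFinset]; exact List.mem_of_head? hx⟩ (by
      intro h
      have : z ∈ l.toFinset := by rw [h]; simp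
      exact hz (List.mem_toFinset.1 this))
    rw [List.mem_toFinset] at ha hb
    obtain ⟨s, t, rfl⟩ := List.append_of_mem ha
    have hperm : ((a :: t) ++ s).Perm (s ++ a :: t) := List.perm_append_comm
    refine ⟨b :: ((a :: t) ++ s), ⟨?_, ?_⟩, ?_⟩
    · have hch : List.IsChain Γ'.Adj (s ++ a :: t) := hl.1.imp fun a b h => hle h
      rw [List.isChain_append] at hch
      rw [List.isChain_cons]
      refine ⟨fun y hy => ?_, ?_⟩
      · simp at hy; subst hy; exact (hle hab).symm
      · rw [List.isChain_append]
        refine ⟨hch.2.1, hch.1, ?_⟩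
        intro c hc d hd
        have h1 : (s ++ a :: t).getLast? = some c := by
          rw [List.getLast?_append, hc]; rfl
        have h2 : (s ++ a :: t).head? = some d := by
          rw [List.head?_append, hd]; rfl
        rw [hv] at h1; rw [hx] at h2
        simp at h1 h2
        subst h1; subst h2
        exact hadj
    · rw [List.nodup_cons]
      exact ⟨fun h => hb (hperm.mem_iff.1 h), hperm.nodup_iff.2 hl.2⟩
    · rw [List.length_cons, hperm.length_eq]
      omega


/-- Neighbourhood as a filter. -/
noncomputable def nbF {n : ℕ} (G : SimpleGraph (Fin n)) (v : Fin n) : Finset (Fin n) :=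
  Finset.univ.filter (fun w => G.Adj v w)

lemma mem_nbF {n : ℕ} {G : SimpleGraph (Fin n)} {v w : Fin n} : w ∈ nbF G v ↔ G.Adj v w := by
  unfold nbF; simp

lemma card_nbF {n : ℕ} (G : SimpleGraph (Fin n)) (v : Fin n) : (nbF G v).card = G.degree v := by
  rw [← card_neighborFinset_eq_degree]
  congr 1
  ext w
  rw [mem_nbF, mem_neighborFinset]

lemma mem_cnt_filter {n : ℕ} {G : SimpleGraph (Fin n)} {S : Finset (Fin n × Fin n)}
    {q : Fin n × Fin n} : q ∈ S.filter (fun q => G.Adj q.1 q.2) ↔ q ∈ S ∧ G.Adj q.1 q.2 := by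
  simp

lemma cnt_mono {n : ℕ} {G G' : SimpleGraph (Fin n)} (h : G ≤ G') {S S' : Finset (Fin n × Fin n)}
    (hS : S ⊆ S') : cnt G S ≤ cnt G' S' := by
  unfold cnt
  refine Finset.card_le_card ?_
  intro q hq
  rw [mem_cnt_filter] at hq ⊢
  exact ⟨hS hq.1, h hq.2⟩

lemma cnt_prod_univ {n : ℕ} (G : SimpleGraph (Fin n)) (A : Finset (Fin n)) :
    cnt G (A ×ˢ Finset.univ) = ∑ v ∈ A, G.degree v := by
  unfold cnt
  rw [Finset.card_eq_sum_card_fiberwise (f := Prod.fst) (t := A)]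
  · refine Finset.sum_congr rfl fun v hv => ?_
    rw [← card_nbF]
    refine (Finset.card_bij (fun w _ => (v, w)) ?_ ?_ ?_).symm
    · intro w hw
      rw [mem_nbF] at hw
      simp [hv, hw]
    · intro a _ b _ h
      simpa using h
    · rintro ⟨a, b⟩ hb
      simp only [Finset.mem_filter, Finset.mem_product] at hb
      refine ⟨b, ?_, ?_⟩
      · rw [mem_nbF, ← hb.2]; exact hb.1.2
      · rw [← hb.2]
  · intro q hq
    have := (Finset.mem_filter.1 hq).1
    exact (Finset.mem_product.1 this).1

lemma cnt_sdiff {n : ℕ} (G H : SimpleGraph (Fin n)) (S : Finset (Fin n × Fin n))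
    (A : Finset (Fin n)) (hS : ∀ q ∈ S, q.1 ∈ A) :
    cnt G S ≤ cnt (G \ H) S + ∑ v ∈ A, H.degree v := by
  rw [← cnt_prod_univ]
  unfold cnt
  refine (Finset.card_le_card ?_).trans (Finset.card_union_le _ _)
  intro q hq
  rw [mem_cnt_filter] at hq
  rw [Finset.mem_union, mem_cnt_filter, mem_cnt_filter]
  by_cases h : H.Adj q.1 q.2
  · right
    refine ⟨?_, h⟩
    have := hS q hq.1
    simp [this]
  · left
    exact ⟨hq.1, by rw [sdiff_adj]; exact ⟨hq.2, h⟩⟩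

/-- Greedy hitting set. -/
lemma hitting {β ι : Type*} (E : Finset β) (I : Finset ι) (T : ι → Finset β)
    (hT : ∀ i ∈ I, T i ⊆ E) (α : ℝ) (hα1 : α ≤ 1)
    (hbig : ∀ i ∈ I, α * E.card ≤ (T i).card) (hpos : ∀ i ∈ I, (T i).Nonempty) (t : ℕ) :
    ∃ R : Finset β, R ⊆ E ∧ R.card ≤ t ∧
      ((I.filter (fun i => ∀ e ∈ R, e ∉ T i)).card : ℝ) ≤ (1 - α) ^ t * I.card := by
  induction t with
  | zero =>
    refine ⟨∅, by simp, by simp, ?_⟩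
    simp
  | succ t ih =>
    obtain ⟨R, hRE, hRc, hR⟩ := ih
    set J := I.filter (fun i => ∀ e ∈ R, e ∉ T i) with hJ
    have hJI : J ⊆ I := Finset.filter_subset _ _
    rcases J.eq_empty_or_nonempty with hJe | hJn
    · refine ⟨R, hRE, by omega, ?_⟩
      rw [← hJ, hJe]
      have : 0 ≤ 1 - α := by linarith
      simp
      positivity
    · -- find a popular element
      have hex : ∃ e ∈ E, α * J.card ≤ ((J.filter (fun i => e ∈ T i)).card : ℝ) := by
        by_contra hno
        push Not at hno
        have hEn : E.Nonempty := by
          obtain ⟨i, hi⟩ := hJn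
          obtain ⟨e, he⟩ := hpos i (hJI hi)
          exact ⟨e, hT i (hJI hi) he⟩
        have h1 : ∑ e ∈ E, ((J.filter (fun i => e ∈ T i)).card : ℝ) < ∑ e ∈ E, α * J.card :=
          Finset.sum_lt_sum_of_nonempty hEn hno
        have h2 : ∑ e ∈ E, ((J.filter (fun i => e ∈ T i)).card : ℝ) = ∑ i ∈ J, ((T i).card : ℝ) := by
          have h3 : ∀ e, ((J.filter (fun i => e ∈ T i)).card : ℝ)
              = ∑ i ∈ J, if e ∈ T i then (1 : ℝ) else 0 := by
            intro e; rw [Finset.sum_boole]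
          simp_rw [h3]
          rw [Finset.sum_comm]
          refine Finset.sum_congr rfl fun i hi => ?_
          rw [Finset.sum_boole]
          congr 2
          ext e
          simp only [Finset.mem_filter]
          exact ⟨fun h => h.2, fun h => ⟨hT i (hJI hi) h, h⟩⟩
        have h4 : ∑ i ∈ J, α * (E.card : ℝ) ≤ ∑ i ∈ J, ((T i).card : ℝ) :=
          Finset.sum_le_sum fun i hi => hbig i (hJI hi)
        rw [h2] at h1
        rw [Finset.sum_const, nsmul_eq_mul] at h1 h4
        nlinarith
      obtain ⟨e, heE, he⟩ := hex
      refine ⟨insert e R, Finset.insert_subset heE hRE, (Finset.card_insert_le _ _).trans (by omega),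
        ?_⟩
      have hsub : I.filter (fun i => ∀ e' ∈ insert e R, e' ∉ T i) = J \ J.filter (fun i => e ∈ T i) := by
        ext i
        simp only [hJ, Finset.mem_filter, Finset.mem_sdiff, Finset.mem_insert]
        constructor
        · rintro ⟨hi, h⟩
          exact ⟨⟨hi, fun e' he' => h e' (Or.inr he')⟩, fun h' => h e (Or.inl rfl) h'.2⟩
        · rintro ⟨⟨hi, h⟩, h'⟩
          refine ⟨hi, ?_⟩
          rintro e' (rfl | he')
          · exact fun h2 => h' ⟨⟨hi, h⟩, h2⟩
          · exact h e' he'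
      rw [hsub, Finset.card_sdiff_of_subset (Finset.filter_subset _ _),
        Nat.cast_sub (Finset.card_le_card (Finset.filter_subset _ _)), pow_succ]
      have : 0 ≤ 1 - α := by linarith
      nlinarith

/-- small-set sparsity -/
def Q4 {n : ℕ} (G : SimpleGraph (Fin n)) (d γ μ : ℝ) : Prop :=
  ∀ W : Finset (Fin n), (W.card : ℝ) ≤ μ * n → (cnt G (W ×ˢ W) : ℝ) ≤ γ * (d * W.card)

/-- low degree -/
def Low {n : ℕ} (G : SimpleGraph (Fin n)) (d : ℝ) (v : Fin n) : Prop := (G.degree v : ℝ) < d / 100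

def Q5a {n : ℕ} (G : SimpleGraph (Fin n)) (d : ℝ) : Prop :=
  ∀ u v, Low G d u → Low G d v → ¬ G.Adj u v

def Q5b {n : ℕ} (G : SimpleGraph (Fin n)) (d : ℝ) : Prop :=
  ∀ u v w, Low G d u → Low G d v → u ≠ v → ¬ (G.Adj u w ∧ G.Adj w v)

def Q5c {n : ℕ} (G : SimpleGraph (Fin n)) (d : ℝ) : Prop :=
  ∀ u v a w b, Low G d u → Low G d v → u ≠ v → a ≠ b → w ≠ u → w ≠ v → u ≠ b → a ≠ v →
    ¬ (G.Adj u a ∧ G.Adj a w ∧ G.Adj w b ∧ G.Adj b v)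

def Q5d {n : ℕ} (G : SimpleGraph (Fin n)) (d : ℝ) : Prop :=
  ∀ u a w b, Low G d u → a ≠ b → w ≠ u →
    ¬ (G.Adj u a ∧ G.Adj a w ∧ G.Adj w b ∧ G.Adj b u)

lemma expansion {n : ℕ} (G Γ : SimpleGraph (Fin n)) (hΓ : Γ ≤ G) (d δ γ μ : ℝ) (hd : 0 < d)
    (hγ : 0 < γ) (hγδ : 7 * γ ≤ δ)
    (h4 : Q4 G d γ μ) (h5a : Q5a G d) (h5b : Q5b G d) (h5c : Q5c G d) (h5d : Q5d G d)
    (C : Fin n → Finset (Fin n)) (hC : ∀ v, ∀ w ∈ C v, Γ.Adj v w)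
    (hClow : ∀ v, Low G d v → 2 ≤ (C v).card)
    (hChigh : ∀ v, ¬ Low G d v → δ * d ≤ (C v).card)
    (U : Finset (Fin n)) (hU : 6 * (U.card : ℝ) ≤ μ * n) :
    2 * U.card ≤ (extNbhd Γ U).card := by
  set D : Finset (Fin n) := Finset.univ.filter (fun v => Low G d v) with hD
  have mD : ∀ v, v ∈ D ↔ Low G d v := by intro v; simp [hD]
  set U1 := U \ D with hU1
  set U2 := U ∩ D with hU2
  have hcard : U1.card + U2.card = U.card := Finset.card_sdiff_add_card_inter U D
  set N1 := extNbhd Γ U1 with hN1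
  have hN1c : 5 * U1.card ≤ N1.card := by
    by_contra hlt
    push Not at hlt
    have hU1n : 0 < U1.card := by omega
    set W := U1 ∪ N1 with hW
    have hWc : W.card ≤ 6 * U1.card := (Finset.card_union_le _ _).trans (by omega)
    have hWc' : (W.card : ℝ) ≤ 6 * U1.card := by exact_mod_cast hWc
    have hU1U : (U1.card : ℝ) ≤ U.card := by exact_mod_cast (by omega : U1.card ≤ U.card)
    have hq := h4 W (by linarith)
    have hlow : ∑ u ∈ U1, (C u).card ≤ cnt G (W ×ˢ W) := by
      rw [← Finset.card_sigma]
      unfold cnt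
      refine Finset.card_le_card_of_injOn (fun x => (x.1, x.2)) ?_ ?_
      · rintro ⟨u, w⟩ hx
        have hx' := Finset.mem_sigma.1 (Finset.mem_coe.1 hx)
        dsimp only at hx' ⊢
        rw [Finset.mem_coe, mem_cnt_filter, Finset.mem_product]
        have hadj := hC u w hx'.2
        refine ⟨⟨Finset.mem_union_left _ hx'.1, ?_⟩, hΓ hadj⟩
        by_cases hwU : w ∈ U1
        · exact Finset.mem_union_left _ hwU
        · exact Finset.mem_union_right _ (mem_extNbhd.2 ⟨hwU, u, hx'.1, hadj⟩)
      · rintro ⟨u, w⟩ _ ⟨u', w'⟩ _ h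
        simp at h
        simp [h]
    have hlow2 : (U1.card : ℝ) * (δ * d) ≤ ∑ u ∈ U1, ((C u).card : ℝ) := by
      rw [← nsmul_eq_mul, ← Finset.sum_const]
      refine Finset.sum_le_sum fun u hu => hChigh u ?_
      rw [← mD]
      exact (Finset.mem_sdiff.1 hu).2
    have hlow3 : (∑ u ∈ U1, ((C u).card : ℝ)) ≤ cnt G (W ×ˢ W) := by exact_mod_cast hlow
    have hU1n' : (0 : ℝ) < U1.card := by exact_mod_cast hU1n
    have e1 : γ * (d * W.card) ≤ γ * (d * (6 * U1.card)) := by gcongr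
    have e2 : (U1.card : ℝ) * (7 * γ * d) ≤ U1.card * (δ * d) := by gcongr
    have e3 : 0 < γ * d * U1.card := by positivity
    nlinarith
  set Q := U2.biUnion C with hQ
  have hadjU2 : ∀ x ∈ Q, ∃ z ∈ U2, Γ.Adj z x := by
    intro x hx
    obtain ⟨z, hz, hzx⟩ := Finset.mem_biUnion.1 hx
    exact ⟨z, hz, hC z x hzx⟩
  have hU2low : ∀ z ∈ U2, Low G d z := fun z hz => (mD z).1 (Finset.mem_inter.1 hz).2
  have hQc : 2 * U2.card ≤ Q.card := by
    rw [hQ, Finset.card_biUnion]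
    · rw [mul_comm, ← smul_eq_mul, ← Finset.sum_const]
      exact Finset.sum_le_sum fun z hz => hClow z (hU2low z hz)
    · intro z hz z' hz' hne
      change Disjoint (C z) (C z')
      rw [Finset.disjoint_left]
      intro x hx hx'
      exact h5b z z' x (hU2low z hz) (hU2low z' hz') hne
        ⟨hΓ (hC z x hx), (hΓ (hC z' x hx')).symm⟩
  have hND : (N1 ∩ D).card ≤ U1.card := by
    refine le_trans (Finset.card_le_card ?_) (card_rel_le U1 (fun u x => G.Adj u x ∧ Low G d x) ?_)
    · intro x hx
      obtain ⟨hx1, hx2⟩ := Finset.mem_inter.1 hx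
      obtain ⟨_, u, hu, hux⟩ := mem_extNbhd.1 hx1
      simp only [Finset.mem_filter, Finset.mem_univ, true_and]
      exact ⟨u, hu, hΓ hux, (mD x).1 hx2⟩
    · intro u x x' h h'
      by_contra hne
      exact h5b x x' u h.2 h'.2 hne ⟨h.1.symm, h'.1⟩
  have hNQ : (N1 ∩ Q).card ≤ U1.card := by
    refine le_trans (Finset.card_le_card ?_) (card_rel_le U1
      (fun u x => ¬ Low G d u ∧ G.Adj u x ∧ ∃ z, Low G d z ∧ G.Adj z x) ?_)
    · intro x hx
      obtain ⟨hx1, hx2⟩ := Finset.mem_inter.1 hx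
      obtain ⟨_, u, hu, hux⟩ := mem_extNbhd.1 hx1
      obtain ⟨z, hz, hzx⟩ := hadjU2 x hx2
      simp only [Finset.mem_filter, Finset.mem_univ, true_and]
      refine ⟨u, hu, ?_, hΓ hux, z, hU2low z hz, hΓ hzx⟩
      rw [← mD]
      exact (Finset.mem_sdiff.1 hu).2
    · rintro u x x' ⟨hul, hux, z, hz, hzx⟩ ⟨_, hux', z', hz', hzx'⟩
      by_contra hne
      have huz : u ≠ z := by rintro rfl; exact hul hz
      have huz' : u ≠ z' := by rintro rfl; exact hul hz'
      by_cases hzz : z = z'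
      · subst hzz
        exact h5d z x u x' hz hne huz ⟨hzx, hux.symm, hux', hzx'.symm⟩
      · refine h5c z z' x u x' hz hz' hzz hne huz huz' ?_ ?_ ⟨hzx, hux.symm, hux', hzx'.symm⟩
        · rintro rfl; exact h5a _ _ hz' hz hzx'
        · rintro rfl; exact h5a _ _ hz hz' hzx
  have hsub : (Q \ U1) ∪ (N1 \ (D ∪ Q)) ⊆ extNbhd Γ U := by
    intro x hx
    rw [mem_extNbhd]
    rcases Finset.mem_union.1 hx with hx | hx
    · obtain ⟨hxQ, hxU1⟩ := Finset.mem_sdiff.1 hx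
      obtain ⟨z, hz, hzx⟩ := hadjU2 x hxQ
      refine ⟨fun hxU => ?_, z, (Finset.mem_inter.1 hz).1, hzx⟩
      have : x ∈ D := by
        by_contra hxD
        exact hxU1 (Finset.mem_sdiff.2 ⟨hxU, hxD⟩)
      exact h5a z x (hU2low z hz) ((mD x).1 this) (hΓ hzx)
    · obtain ⟨hxN, hxDQ⟩ := Finset.mem_sdiff.1 hx
      obtain ⟨hxU1, u, hu, hux⟩ := mem_extNbhd.1 hxN
      refine ⟨fun hxU => hxU1 (Finset.mem_sdiff.2 ⟨hxU, fun h => hxDQ (Finset.mem_union_left _ h)⟩),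
        u, (Finset.mem_sdiff.1 hu).1, hux⟩
  have hdisj : Disjoint (Q \ U1) (N1 \ (D ∪ Q)) := by
    rw [Finset.disjoint_left]
    intro x hx hx'
    exact (Finset.mem_sdiff.1 hx').2 (Finset.mem_union_right _ (Finset.mem_sdiff.1 hx).1)
  have hc := Finset.card_le_card hsub
  rw [Finset.card_union_of_disjoint hdisj] at hc
  have c1 : Q.card ≤ (Q \ U1).card + U1.card := by
    have := Finset.le_card_sdiff U1 Q
    omega
  have c2 : N1.card ≤ (N1 \ (D ∪ Q)).card + ((N1 ∩ D).card + (N1 ∩ Q).card) := by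
    have h1 := Finset.card_sdiff_add_card_inter N1 (D ∪ Q)
    have h2 : (N1 ∩ (D ∪ Q)).card ≤ (N1 ∩ D).card + (N1 ∩ Q).card := by
      rw [Finset.inter_union_distrib_left]
      exact Finset.card_union_le _ _
    omega
  omega


lemma mem_endSet {n : ℕ} {Γ : SimpleGraph (Fin n)} {v w : Fin n} :
    w ∈ endSet Γ v ↔ ∃ l, LongL Γ l ∧ l.head? = some w ∧ l.getLast? = some v := by
  unfold endSet; simp

lemma PathL_reverse {n : ℕ} {Γ : SimpleGraph (Fin n)} {l : List (Fin n)} (h : PathL Γ l) :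
    PathL Γ l.reverse := by
  refine ⟨?_, List.nodup_reverse.2 h.2⟩
  rw [List.isChain_reverse]
  exact h.1.imp fun a b h => h.symm

lemma LongL_reverse {n : ℕ} {Γ : SimpleGraph (Fin n)} {l : List (Fin n)} (h : LongL Γ l) :
    LongL Γ l.reverse := by
  refine ⟨PathL_reverse h.1, fun l' hl' => ?_⟩
  rw [List.length_reverse]; exact h.2 l' hl'

lemma edge_card_sup {n : ℕ} (Γ Γ' : SimpleGraph (Fin n)) (u v : Fin n)
    (h : Γ' = Γ ⊔ fromEdgeSet {s(u, v)}) :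
    Γ'.edgeFinset.card ≤ Γ.edgeFinset.card + 1 := by
  refine (Finset.card_le_card (t := insert s(u,v) Γ.edgeFinset) ?_).trans (Finset.card_insert_le _ _)
  intro e he
  rw [SimpleGraph.mem_edgeFinset, h, SimpleGraph.edgeSet_sup] at he
  rw [Finset.mem_insert, SimpleGraph.mem_edgeFinset]
  rcases he with he | he
  · exact Or.inr he
  · left
    rw [SimpleGraph.edgeSet_fromEdgeSet] at he
    exact he.1

lemma core_conn {n : ℕ} (Γ : SimpleGraph (Fin n)) (m : ℕ) 
    (hexp : ∀ U : Finset (Fin n), U.card < m → 2 * U.card ≤ (extNbhd Γ U).card)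
    (hed : ∀ U Z : Finset (Fin n), m ≤ U.card → n ≤ 3 * Z.card → ∃ u ∈ U, ∃ z ∈ Z, Γ.Adj u z)
    (Y : Finset (Fin n)) (hY : Y.Nonempty) (hYu : Y ≠ Finset.univ) :
    ∃ a ∈ Y, ∃ b ∉ Y, Γ.Adj a b := by
  have key : ∀ X : Finset (Fin n), X.Nonempty → 2 * X.card ≤ n → ∃ a ∈ X, ∃ b ∉ X, Γ.Adj a b := by
    intro X hX hXn
    by_cases h : X.card < m
    · have h1 := hexp X h
      have h2 : 0 < X.card := hX.card_pos
      obtain ⟨b, hb⟩ := Finset.card_pos.1 (by omega : 0 < (extNbhd Γ X).card)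
      obtain ⟨hb1, a, ha, hab⟩ := mem_extNbhd.1 hb
      exact ⟨a, ha, b, hb1, hab⟩
    · have hc : Xᶜ.card = n - X.card := by rw [Finset.card_compl, Fintype.card_fin]
      obtain ⟨a, ha, b, hb, hab⟩ := hed X Xᶜ (by omega) (by omega)
      exact ⟨a, ha, b, Finset.mem_compl.1 hb, hab⟩
  by_cases h : 2 * Y.card ≤ n
  · exact key Y hY h
  · have hc : Yᶜ.card = n - Y.card := by rw [Finset.card_compl, Fintype.card_fin]
    have hne : Yᶜ.Nonempty := by
      rw [Finset.nonempty_iff_ne_empty]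
      intro h0
      exact hYu ((Finset.compl_eq_empty_iff Y).1 h0)
    obtain ⟨a, ha, b, hb, hab⟩ := key Yᶜ hne (by omega)
    exact ⟨b, by simpa using hb, a, by simpa using ha, hab.symm⟩

lemma core {n : ℕ} (hn : 3 ≤ n) (F Γ0 : SimpleGraph (Fin n)) (hΓ0 : Γ0 ≤ F) (m : ℕ) (hm : 1 ≤ m)
    (hexp : ∀ Γ : SimpleGraph (Fin n), Γ0 ≤ Γ → Γ ≤ F →
      ∀ U : Finset (Fin n), U.card < m → 2 * U.card ≤ (extNbhd Γ U).card)
    (hed : ∀ U Z : Finset (Fin n), m ≤ U.card → n ≤ 3 * Z.card → ∃ u ∈ U, ∃ z ∈ Z, Γ0.Adj u z)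
    (hF : ¬ F.IsHamiltonian) :
    ∃ Γ : SimpleGraph (Fin n), Γ ≤ F ∧ Γ.edgeFinset.card ≤ Γ0.edgeFinset.card + n ∧
      ∃ A : Finset (Fin n), 2 * n ≤ 3 * m + 6 * A.card ∧
        (∀ v ∈ A, 2 * n ≤ 3 * m + 6 * (endSet Γ v).card) ∧
        (∀ v, v ∉ A → endSet Γ v = ∅) ∧
        ∀ v, ∀ w ∈ endSet Γ v, ¬ F.Adj v w := by
  set P : ℕ → Prop := fun j => ∃ Γ : SimpleGraph (Fin n), Γ0 ≤ Γ ∧ Γ ≤ F ∧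
    Γ.edgeFinset.card ≤ Γ0.edgeFinset.card + j ∧ ∃ l, PathL Γ l ∧ l.length = j with hP
  have hPn : ∀ j, P j → j ≤ n := by
    rintro j ⟨Γ, _, _, _, l, hl, rfl⟩
    simpa using hl.2.length_le_card
  have hP0 : P 0 := ⟨Γ0, le_rfl, hΓ0, le_rfl, [], ⟨by simp, by simp⟩, rfl⟩
  have hmax : P (Nat.findGreatest P n) := Nat.findGreatest_spec (Nat.zero_le n) hP0
  set j := Nat.findGreatest P n with hj
  have hjmax : ∀ i, P i → i ≤ j := fun i hi => Nat.le_findGreatest (hPn i hi) hi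
  obtain ⟨Γ, h0Γ, hΓF, hcard, l, hl, hlj⟩ := hmax
  have hlong : LongL Γ l := by
    refine ⟨hl, fun l' hl' => ?_⟩
    by_contra hlt
    push Not at hlt
    have := hjmax l'.length ⟨Γ, h0Γ, hΓF, by omega, l', hl', rfl⟩
    omega
  have hlen : ∀ l', LongL Γ l' → l'.length = j := fun l' hl' =>
    le_antisymm (hlj ▸ hlong.2 l' hl'.1) (hlj ▸ hl'.2 l hl)
  have hexpΓ := hexp Γ h0Γ hΓF
  have hedΓ : ∀ U Z : Finset (Fin n), m ≤ U.card → n ≤ 3 * Z.card → ∃ u ∈ U, ∃ z ∈ Z, Γ.Adj u z := by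
    intro U Z hU hZ
    obtain ⟨u, hu, z, hz, h⟩ := hed U Z hU hZ
    exact ⟨u, hu, z, hz, h0Γ h⟩
  have hconn := core_conn Γ m hexpΓ hedΓ
  have hno : ∀ v, ∀ w ∈ endSet Γ v, ¬ F.Adj v w := by
    intro v w hw hadj
    obtain ⟨l1, hl1, hh, ht⟩ := mem_endSet.1 hw
    set Γ' := Γ ⊔ fromEdgeSet {s(v, w)} with hΓ'
    have hΓ'F : Γ' ≤ F := by
      refine sup_le hΓF ?_
      intro a b hab
      rw [SimpleGraph.fromEdgeSet_adj, Set.mem_singleton_iff, Sym2.eq_iff] at hab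
      rcases hab.1 with ⟨rfl, rfl⟩ | ⟨rfl, rfl⟩
      · exact hadj
      · exact hadj.symm
    have hadj' : Γ'.Adj v w := by
      right
      rw [SimpleGraph.fromEdgeSet_adj]
      exact ⟨rfl, hadj.ne⟩
    have hc' := edge_card_sup Γ Γ' v w hΓ'
    rcases booster hn Γ Γ' le_sup_left hconn hl1.1 hh ht hadj' with h | ⟨l', hl', hlt⟩
    · exact hF (h.mono hΓ'F)
    · have h1 := hlen l1 hl1
      have h2 := hjmax l'.length ⟨Γ', h0Γ.trans le_sup_left, hΓ'F, by
        refine le_trans (b := Γ.edgeFinset.card + 1) ?_ (by omega)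
        exact hc', l', hl', rfl⟩
      omega
  have hbig : ∀ v, (endSet Γ v).Nonempty → 2 * n ≤ 3 * m + 6 * (endSet Γ v).card := by
    rintro v ⟨w, hw⟩
    obtain ⟨l1, hl1, hh, ht⟩ := mem_endSet.1 hw
    obtain ⟨U, hU, hUe⟩ := posa Γ hl1 hh ht m hm (fun U _ h => hexpΓ U h)
    set Z := (U ∪ extNbhd Γ U)ᶜ with hZ
    have hZc : Z.card = n - (U ∪ extNbhd Γ U).card := by rw [hZ, Finset.card_compl, Fintype.card_fin]
    have hu := Finset.card_union_le U (extNbhd Γ U)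
    have : 3 * Z.card < n := by
      by_contra hlt
      push Not at hlt
      obtain ⟨a, ha, b, hb, hab⟩ := hedΓ U Z (by omega) hlt
      rw [hZ, Finset.mem_compl, Finset.mem_union] at hb
      apply hb
      by_cases hbU : b ∈ U
      · exact Or.inl hbU
      · exact Or.inr (mem_extNbhd.2 ⟨hbU, a, ha, hab⟩)
    omega
  refine ⟨Γ, hΓF, hcard.trans (by have := hPn j ⟨Γ, h0Γ, hΓF, hcard, l, hl, hlj⟩; omega),
    Finset.univ.filter (fun v => (endSet Γ v).Nonempty), ?_, ?_, ?_, hno⟩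
  · have hne : l ≠ [] := by
      rintro rfl
      have := hlong.2 [⟨0, by omega⟩] ⟨by simp, by simp⟩
      simp at this
    obtain ⟨x, hx⟩ : ∃ x, l.head? = some x := ⟨_, List.head?_eq_some_head hne⟩
    obtain ⟨v, hv⟩ : ∃ x, l.getLast? = some x := ⟨_, List.getLast?_eq_some_getLast hne⟩
    have h1 := hbig v ⟨x, mem_endSet.2 ⟨l, hlong, hx, hv⟩⟩
    have h2 : (endSet Γ v).card ≤ (Finset.univ.filter (fun v => (endSet Γ v).Nonempty)).card := by
      refine Finset.card_le_card fun w hw => ?_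
      obtain ⟨l1, hl1, hh, ht⟩ := mem_endSet.1 hw
      refine Finset.mem_filter.2 ⟨Finset.mem_univ _, v, mem_endSet.2 ⟨l1.reverse, LongL_reverse hl1, ?_, ?_⟩⟩
      · simpa using ht
      · simpa using hh
    omega
  · intro v hv
    exact hbig v (Finset.mem_filter.1 hv).2
  · intro v hv
    by_contra h
    exact hv (Finset.mem_filter.2 ⟨Finset.mem_univ _, Finset.nonempty_iff_ne_empty.2 h⟩)


def Q1 {n : ℕ} (G : SimpleGraph (Fin n)) (d η β : ℝ) : Prop :=
  ∀ A : Finset (Fin n), β * n ≤ A.card →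
    (cnt G (A ×ˢ Finset.univ) : ℝ) ≤ (1 + η) * (d * A.card)

def Q2 {n : ℕ} (G : SimpleGraph (Fin n)) (p η ν : ℝ) : Prop :=
  ∀ U Z : Finset (Fin n), ν * n ≤ U.card → (n : ℝ) / 4 ≤ Z.card →
    (1 - η) * (p * (U.card * Z.card)) ≤ cnt G (U ×ˢ Z)

noncomputable def boostPairs {n : ℕ} (Γ : SimpleGraph (Fin n)) : Finset (Fin n × Fin n) :=
  Finset.univ.filter (fun q => q.1 ≠ q.2 ∧ ¬ Γ.Adj q.1 q.2 ∧ q.2 ∈ endSet Γ q.1)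

lemma mem_boostPairs {n : ℕ} {Γ : SimpleGraph (Fin n)} {q : Fin n × Fin n} :
    q ∈ boostPairs Γ ↔ q.1 ≠ q.2 ∧ ¬ Γ.Adj q.1 q.2 ∧ q.2 ∈ endSet Γ q.1 := by
  unfold boostPairs; simp

def Q3 {n : ℕ} (G : SimpleGraph (Fin n)) (p η M : ℝ) : Prop :=
  ∀ Γ : SimpleGraph (Fin n), Γ ≤ G → (Γ.edgeFinset.card : ℝ) ≤ M →
    (n : ℝ) ^ 2 / 20 ≤ (boostPairs Γ).card →
    (1 - η) * (p * (boostPairs Γ).card) ≤ cnt G (boostPairs Γ)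

lemma lowcard {n : ℕ} (G : SimpleGraph (Fin n)) (p d η ν : ℝ) (hdp : d = n * p) (hd : 0 < d)
    (hη : η ≤ 1 / 2) (hν : 0 < ν) (hn : 0 < n) (h2 : Q2 G p η ν) (D : Finset (Fin n))
    (hD : ∀ v ∈ D, Low G d v) : (D.card : ℝ) < ν * n := by
  by_contra hlt
  push Not at hlt
  have hn' : (0 : ℝ) < n := by exact_mod_cast hn
  have h := h2 D Finset.univ hlt (by rw [Finset.card_univ, Fintype.card_fin]; linarith)
  rw [cnt_prod_univ, Finset.card_univ, Fintype.card_fin] at h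
  push_cast at h
  have h3 : (∑ v ∈ D, (G.degree v : ℝ)) ≤ ∑ v ∈ D, d / 100 :=
    Finset.sum_le_sum fun v hv => (hD v hv).le
  rw [Finset.sum_const, nsmul_eq_mul] at h3
  have h4 : (0 : ℝ) < D.card := lt_of_lt_of_le (by positivity) hlt
  have h5 : p * (D.card * n) = d * D.card := by rw [hdp]; ring
  rw [h5] at h
  have : 0 < d * D.card := by positivity
  nlinarith

lemma sumH {n : ℕ} (G H : SimpleGraph (Fin n)) (hH : H ≤ G) (p d ε β : ℝ) (hdp : d = n * p) (hd : 0 < d)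
    (hε : 0 < ε) (hε3 : ε ≤ 1 / 3) (hβ : 0 < β) (hn : 0 < n)
    (h1 : Q1 G d (ε / 8) β) (h2 : Q2 G p (ε / 8) (β * ε))
    (hhigh : ∀ v, ¬ Low G d v → (H.degree v : ℝ) ≤ (1 / 3 - ε) * G.degree v)
    (A : Finset (Fin n)) (hA : β * n ≤ A.card) :
    (∑ v ∈ A, (H.degree v : ℝ)) ≤ (1 / 3 - ε / 2) * (d * A.card) := by
  have hn' : (0 : ℝ) < n := by exact_mod_cast hn
  set D := A.filter (fun v => Low G d v) with hD
  have hDc := lowcard G p d (ε / 8) (β * ε) hdp hd (by linarith) (by positivity) hn h2 D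
    (fun v hv => (Finset.mem_filter.1 hv).2)
  have hdeg : ∀ v, (H.degree v : ℝ) ≤ G.degree v := by
    intro v
    exact_mod_cast SimpleGraph.degree_le_of_le hH
  have e1 : (∑ v ∈ A, (H.degree v : ℝ)) ≤
      ∑ v ∈ A, ((if Low G d v then d / 100 else 0) + (1 / 3 - ε) * G.degree v) := by
    refine Finset.sum_le_sum fun v hv => ?_
    have h0 : (0 : ℝ) ≤ (1 / 3 - ε) * G.degree v := mul_nonneg (by linarith) (by positivity)
    split_ifs with hl
    · have h3 : (G.degree v : ℝ) < d / 100 := hl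
      have := hdeg v
      linarith
    · have := hhigh v hl
      linarith
  rw [Finset.sum_add_distrib, ← Finset.sum_filter, Finset.sum_const, nsmul_eq_mul, ← Finset.mul_sum] at e1
  have e2 := h1 A hA
  rw [cnt_prod_univ] at e2
  push_cast at e2
  have e3 : (1 / 3 - ε) * ∑ v ∈ A, (G.degree v : ℝ) ≤ (1 / 3 - ε) * ((1 + ε / 8) * (d * A.card)) :=
    mul_le_mul_of_nonneg_left e2 (by linarith)
  have e4 : (D.card : ℝ) * (d / 100) ≤ (ε * A.card) * (d / 100) := by
    refine mul_le_mul_of_nonneg_right ?_ (by positivity)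
    nlinarith
  have e5 : (0 : ℝ) ≤ d * A.card := by positivity
  have e6 : 0 ≤ ε * (d * A.card) := by positivity
  have e7 : 0 ≤ ε * (ε * (d * A.card)) := by positivity
  nlinarith

lemma hitting' {β ι : Type*} (E : Finset β) (I : Finset ι) (T : ι → Finset β)
    (hT : ∀ i ∈ I, T i ⊆ E) (α : ℝ) (hα1 : α ≤ 1)
    (hbig : ∀ i ∈ I, α * E.card ≤ (T i).card) (hpos : ∀ i ∈ I, (T i).Nonempty) (t : ℕ) :
    ∃ R : Finset β, R ⊆ E ∧ R.card ≤ t ∧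
      ((1 - α) ^ t * I.card < 1 → ∀ i ∈ I, ∃ e ∈ R, e ∈ T i) := by
  obtain ⟨R, h1, h2, h3⟩ := hitting E I T hT α hα1 hbig hpos t
  refine ⟨R, h1, h2, fun hlt i hi => ?_⟩
  by_contra hno
  push Not at hno
  have h4 : 0 < (I.filter (fun i => ∀ e ∈ R, e ∉ T i)).card :=
    Finset.card_pos.2 ⟨i, Finset.mem_filter.2 ⟨hi, hno⟩⟩
  have h5 : (1 : ℝ) ≤ (I.filter (fun i => ∀ e ∈ R, e ∉ T i)).card := by exact_mod_cast h4
  linarith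

lemma hitR {n : ℕ} (hn : 0 < n) (F : SimpleGraph (Fin n)) (d ε β : ℝ) (hd : 0 < d) (hε : 0 < ε)
    (hε3 : ε ≤ 1 / 3) (hβ : 0 < β) (hβ1 : β ≤ 1)
    (hE : (cnt F Finset.univ : ℝ) ≤ 2 * (d * n))
    (hF : ∀ U Z : Finset (Fin n), β * n ≤ U.card → (n : ℝ) / 3 ≤ Z.card →
      ε / 4 * (d * (β * n)) ≤ cnt F (U ×ˢ Z)) :
    ∃ R : Finset (Fin n × Fin n), (∀ q ∈ R, F.Adj q.1 q.2) ∧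
      (R.card : ℝ) ≤ 2 * n / (ε * β / 8) + 1 ∧
      ∀ U Z : Finset (Fin n), β * n ≤ U.card → (n : ℝ) / 3 ≤ Z.card → ∃ q ∈ R, q.1 ∈ U ∧ q.2 ∈ Z := by
  have hn' : (0 : ℝ) < n := by exact_mod_cast hn
  set α := ε * β / 8 with hα
  have hα0 : 0 < α := by positivity
  have hα1 : α ≤ 1 := by rw [hα]; nlinarith
  set E := (Finset.univ : Finset (Fin n × Fin n)).filter (fun q => F.Adj q.1 q.2) with hEd
  set I : Finset (Finset (Fin n) × Finset (Fin n)) :=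
    Finset.univ.filter (fun i => β * n ≤ i.1.card ∧ (n : ℝ) / 3 ≤ i.2.card) with hI
  set T : Finset (Fin n) × Finset (Fin n) → Finset (Fin n × Fin n) :=
    fun i => (i.1 ×ˢ i.2).filter (fun q => F.Adj q.1 q.2) with hT
  have hlow : ∀ i ∈ I, ε / 4 * (d * (β * n)) ≤ ((T i).card : ℝ) := by
    intro i hi
    have := (Finset.mem_filter.1 hi).2
    exact hF i.1 i.2 this.1 this.2
  have hEc : (E.card : ℝ) ≤ 2 * (d * n) := hE
  obtain ⟨R, hRE, hRc, hR⟩ := hitting' E I T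
    (by
      intro i _ q hq
      exact Finset.mem_filter.2 ⟨Finset.mem_univ _, (Finset.mem_filter.1 hq).2⟩)
    α hα1
    (by
      intro i hi
      refine le_trans ?_ (hlow i hi)
      calc α * E.card ≤ α * (2 * (d * n)) := by gcongr
        _ = ε / 4 * (d * (β * n)) := by rw [hα]; ring)
    (by
      intro i hi
      rw [← Finset.card_pos]
      have := hlow i hi
      have h0 : 0 < ε / 4 * (d * (β * n)) := by positivity
      exact_mod_cast h0.trans_le this)
    ⌈2 * n / α⌉₊
  refine ⟨R, fun q hq => (Finset.mem_filter.1 (hRE hq)).2, ?_, ?_⟩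
  · have h1 : ((⌈2 * n / α⌉₊ : ℕ) : ℝ) < 2 * n / α + 1 := Nat.ceil_lt_add_one (by positivity)
    have h2 : (R.card : ℝ) ≤ (⌈2 * n / α⌉₊ : ℕ) := by exact_mod_cast hRc
    linarith
  · intro U Z hU hZ
    by_contra hno
    push Not at hno
    have hIc : (I.card : ℝ) ≤ 4 ^ n := by
      have : I.card ≤ (Finset.univ : Finset (Finset (Fin n) × Finset (Fin n))).card :=
        Finset.card_le_card (Finset.filter_subset _ _)
      rw [Finset.card_univ, Fintype.card_prod, Fintype.card_finset, Fintype.card_fin, ← mul_pow] at this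
      exact_mod_cast this
    set t := ⌈2 * n / α⌉₊ with ht
    have h2 : (1 - α) ^ t ≤ Real.exp (-(2 * n)) := by
      have h3 : 1 - α ≤ Real.exp (-α) := by have := Real.add_one_le_exp (-α); linarith
      calc (1 - α) ^ t ≤ Real.exp (-α) ^ t := pow_le_pow_left₀ (by linarith) h3 t
        _ = Real.exp (t * (-α)) := by rw [← Real.exp_nat_mul]
        _ ≤ _ := by
          apply Real.exp_le_exp.2
          have h4 : 2 * n / α ≤ t := Nat.le_ceil _
          rw [div_le_iff₀ hα0] at h4
          linarith
    have h5 : (4 : ℝ) ^ n < Real.exp (2 * n) := by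
      have h6 : (4 : ℝ) < Real.exp 2 := by
        have h7 := Real.exp_one_gt_d9
        have : Real.exp 2 = Real.exp 1 * Real.exp 1 := by rw [← Real.exp_add]; norm_num
        rw [this]; nlinarith
      calc (4 : ℝ) ^ n < Real.exp 2 ^ n := pow_lt_pow_left₀ h6 (by norm_num) hn.ne'
        _ = _ := by rw [← Real.exp_nat_mul, mul_comm]
    have h8 : (1 - α) ^ t * I.card ≤ Real.exp (-(2 * n)) * 4 ^ n := by gcongr
    have h9 : Real.exp (-(2 * n)) * 4 ^ n < Real.exp (-(2 * n)) * Real.exp (2 * n) := by gcongr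
    rw [← Real.exp_add, neg_add_cancel, Real.exp_zero] at h9
    obtain ⟨e, he, heT⟩ := hR (h8.trans_lt h9) (U, Z) (Finset.mem_filter.2 ⟨Finset.mem_univ _, hU, hZ⟩)
    have := Finset.mem_product.1 (Finset.mem_filter.1 heT).1
    exact hno e he this.1 this.2

lemma gamma0 {n : ℕ} (F : SimpleGraph (Fin n)) (C : Fin n → Finset (Fin n)) (k : ℕ)
    (hC : ∀ v, ∀ w ∈ C v, F.Adj v w) (hCk : ∀ v, (C v).card ≤ k) (R : Finset (Fin n × Fin n))
    (hR : ∀ q ∈ R, F.Adj q.1 q.2) :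
    ∃ Γ : SimpleGraph (Fin n), Γ ≤ F ∧ (∀ v, ∀ w ∈ C v, Γ.Adj v w) ∧ (∀ q ∈ R, Γ.Adj q.1 q.2) ∧
      Γ.edgeFinset.card ≤ n * k + R.card := by
  set T : Finset (Fin n × Fin n) := (Finset.univ.biUnion fun v => (C v).image fun w => (v, w)) ∪ R with hT
  have hTF : ∀ q ∈ T, F.Adj q.1 q.2 := by
    intro q hq
    rcases Finset.mem_union.1 hq with h | h
    · obtain ⟨v, _, hv⟩ := Finset.mem_biUnion.1 h
      obtain ⟨w, hw, rfl⟩ := Finset.mem_image.1 hv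
      exact hC v w hw
    · exact hR q h
  have hTc : T.card ≤ n * k + R.card := by
    refine (Finset.card_union_le _ _).trans (Nat.add_le_add_right ?_ _)
    refine Finset.card_biUnion_le.trans ?_
    calc ∑ v : Fin n, ((C v).image fun w => (v, w)).card ≤ ∑ v : Fin n, k :=
          Finset.sum_le_sum fun v _ => Finset.card_image_le.trans (hCk v)
      _ = n * k := by simp
  obtain ⟨Γ, hΓ⟩ : ∃ Γ : SimpleGraph (Fin n), Γ = fromEdgeSet
      ((T.image fun q => s(q.1, q.2) : Finset (Sym2 (Fin n))) : Set (Sym2 (Fin n))) := ⟨_, rfl⟩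
  have hadj : ∀ q ∈ T, Γ.Adj q.1 q.2 := by
    intro q hq
    rw [hΓ, SimpleGraph.fromEdgeSet_adj]
    exact ⟨Finset.mem_coe.2 (Finset.mem_image.2 ⟨q, hq, rfl⟩), (hTF q hq).ne⟩
  refine ⟨Γ, ?_, ?_, ?_, ?_⟩
  · intro a b hab
    rw [hΓ, SimpleGraph.fromEdgeSet_adj] at hab
    obtain ⟨q, hq, he⟩ := Finset.mem_image.1 (Finset.mem_coe.1 hab.1)
    have := hTF q hq
    rcases Sym2.eq_iff.1 he with ⟨h1, h2⟩ | ⟨h1, h2⟩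
    · rw [← h1, ← h2]; exact this
    · rw [← h1, ← h2]; exact this.symm
  · intro v w hw
    exact hadj (v, w) (Finset.mem_union_left _ (Finset.mem_biUnion.2 ⟨v, Finset.mem_univ _, Finset.mem_image.2 ⟨w, hw, rfl⟩⟩))
  · intro q hq
    exact hadj q (Finset.mem_union_right _ hq)
  · refine le_trans (Finset.card_le_card ?_) ((Finset.card_image_le (f := fun q : Fin n × Fin n => s(q.1, q.2)) (s := T)).trans hTc)
    intro e he
    rw [SimpleGraph.mem_edgeFinset, hΓ, SimpleGraph.edgeSet_fromEdgeSet] at he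
    exact Finset.mem_coe.1 he.1


lemma boost_card {n : ℕ} (Γ : SimpleGraph (Fin n)) (A : Finset (Fin n)) (x : ℝ)
    (hx : ∀ v ∈ A, x + 1 ≤ (endSet Γ v).card) (hno : ∀ v, ∀ w ∈ endSet Γ v, ¬ Γ.Adj v w) :
    (A.card : ℝ) * x ≤ (boostPairs Γ).card := by
  set T := A.biUnion (fun v => ((endSet Γ v).erase v).image (fun w => (v, w))) with hT
  have h1 : T ⊆ boostPairs Γ := by
    intro q hq
    obtain ⟨v, hv, hq⟩ := Finset.mem_biUnion.1 hq
    obtain ⟨w, hw, rfl⟩ := Finset.mem_image.1 hq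
    obtain ⟨h1, h2⟩ := Finset.mem_erase.1 hw
    exact mem_boostPairs.2 ⟨h1.symm, hno v w h2, h2⟩
  have h2 : T.card = ∑ v ∈ A, ((endSet Γ v).erase v).card := by
    rw [hT, Finset.card_biUnion]
    · refine Finset.sum_congr rfl fun v _ => ?_
      refine Finset.card_image_of_injective _ ?_
      intro a b h
      exact (Prod.mk.inj h).2
    · intro v _ v' _ hne
      change Disjoint _ _
      rw [Finset.disjoint_left]
      intro q hq hq'
      obtain ⟨w, _, rfl⟩ := Finset.mem_image.1 hq
      obtain ⟨w', _, h⟩ := Finset.mem_image.1 hq'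
      exact hne (Prod.mk.inj h).1.symm
  have h3 : (T.card : ℝ) ≤ (boostPairs Γ).card := by exact_mod_cast Finset.card_le_card h1
  refine le_trans ?_ h3
  rw [h2]
  push_cast
  rw [← nsmul_eq_mul, ← Finset.sum_const]
  refine Finset.sum_le_sum fun v hv => ?_
  have h4 := hx v hv
  have h5 : (endSet Γ v).card ≤ ((endSet Γ v).erase v).card + 1 := by
    have := Finset.pred_card_le_card_erase (s := endSet Γ v) (a := v)
    omega
  have h6 : ((endSet Γ v).card : ℝ) ≤ ((endSet Γ v).erase v).card + 1 := by exact_mod_cast h5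
  linarith

lemma deg_sdiff {n : ℕ} (G H : SimpleGraph (Fin n)) (v : Fin n) :
    G.degree v ≤ (nbF (G \ H) v).card + H.degree v := by
  have h := cnt_sdiff G H ({v} ×ˢ Finset.univ) {v} (by
    intro q hq
    exact (Finset.mem_product.1 hq).1)
  rw [cnt_prod_univ, cnt_prod_univ, Finset.sum_singleton, Finset.sum_singleton, Finset.sum_singleton] at h
  rw [card_nbF]
  exact h

set_option maxHeartbeats 1000000 in
theorem determ {n : ℕ} (hn : 3 ≤ n) (G : SimpleGraph (Fin n)) (p d ε β δ γ μ M : ℝ)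
    (hdp : d = n * p) (hd : 0 < d) (hε : 0 < ε) (hε3 : ε ≤ 1 / 3) (hβ : 0 < β) (hβε : β ≤ ε / 16)
    (hβn : 1 ≤ β * n) (hδd : 1 < δ * d) (hδd' : δ * d + 1 ≤ d / 150) (hγ : 0 < γ)
    (hγδ : 7 * γ ≤ δ) (hμ : 6 * β ≤ μ)
    (hM : n * (δ * d + 1) + (2 * n / (ε * β / 8) + 1) + n ≤ M)
    (h1 : Q1 G d (ε / 8) β) (h2 : Q2 G p (ε / 8) (β * ε)) (h3 : Q3 G p (ε / 8) M)
    (h4 : Q4 G d γ μ) (h5a : Q5a G d) (h5b : Q5b G d) (h5c : Q5c G d) (h5d : Q5d G d)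
    (H : SimpleGraph (Fin n)) (hH : H ≤ G)
    (hlow : ∀ v, Low G d v → (H.degree v : ℝ) ≤ (G.degree v : ℝ) - 2)
    (hhigh : ∀ v, ¬ Low G d v → (H.degree v : ℝ) ≤ (1 / 3 - ε) * G.degree v) :
    (G \ H).IsHamiltonian := by
  by_contra hF
  have hn' : (0 : ℝ) < n := by exact_mod_cast (by omega : 0 < n)
  have hp : 0 < p := by
    by_contra h
    push Not at h
    have : (n : ℝ) * p ≤ 0 := mul_nonpos_of_nonneg_of_nonpos hn'.le h
    linarith
  have hsum := sumH G H hH p d ε β hdp hd hε hε3 hβ (by omega) h1 h2 hhigh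
  set F := G \ H with hFd
  have hFG : F ≤ G := sdiff_le
  set k := ⌈δ * d⌉₊ with hk
  have hk1 : δ * d ≤ k := Nat.le_ceil _
  have hk2 : (k : ℝ) < δ * d + 1 := Nat.ceil_lt_add_one (by linarith)
  have hk3 : 2 ≤ k := by
    have : (1 : ℝ) < k := by linarith
    exact_mod_cast this
  have hCex : ∀ v, ∃ C ⊆ nbF F v, C.card = min k (nbF F v).card := fun v =>
    Finset.exists_subset_card_eq (min_le_right _ _)
  choose C hCsub hCcard using hCex
  have hCF : ∀ v, ∀ w ∈ C v, F.Adj v w := fun v w hw => mem_nbF.1 (hCsub v hw)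
  have hClow : ∀ v, Low G d v → 2 ≤ (C v).card := by
    intro v hv
    rw [hCcard]
    refine le_min hk3 ?_
    have e1 : (G.degree v : ℝ) ≤ (nbF F v).card + H.degree v := by exact_mod_cast deg_sdiff G H v
    have e2 := hlow v hv
    have : (2 : ℝ) ≤ (nbF F v).card := by linarith
    exact_mod_cast this
  have hChigh : ∀ v, ¬ Low G d v → δ * d ≤ (C v).card := by
    intro v hv
    have e1 : (G.degree v : ℝ) ≤ (nbF F v).card + H.degree v := by exact_mod_cast deg_sdiff G H v
    have e2 := hhigh v hv
    have e3 : d / 100 ≤ G.degree v := not_lt.1 hv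
    have e4 : δ * d ≤ (nbF F v).card := by
      have : 0 ≤ ε * G.degree v := by positivity
      nlinarith
    rw [hCcard]
    push_cast
    exact le_min hk1 e4
  have hEd : (cnt F Finset.univ : ℝ) ≤ 2 * (d * n) := by
    have e1 : cnt F Finset.univ ≤ cnt G (Finset.univ ×ˢ Finset.univ) := cnt_mono hFG (by simp)
    have e2 := h1 Finset.univ (by
      rw [Finset.card_univ, Fintype.card_fin]
      nlinarith)
    rw [Finset.card_univ, Fintype.card_fin] at e2
    have e3 : (cnt F Finset.univ : ℝ) ≤ cnt G (Finset.univ ×ˢ Finset.univ) := by exact_mod_cast e1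
    have : 0 < d * n := by positivity
    nlinarith
  have hUZ : ∀ U Z : Finset (Fin n), β * n ≤ U.card → (n : ℝ) / 3 ≤ Z.card →
      ε / 4 * (d * (β * n)) ≤ cnt F (U ×ˢ Z) := by
    intro U Z hU hZ
    have e1 := h2 U Z (by nlinarith [mul_pos hβ hn']) (by linarith)
    have e2 : (cnt G (U ×ˢ Z) : ℝ) ≤ cnt F (U ×ˢ Z) + ∑ v ∈ U, (H.degree v : ℝ) := by
      exact_mod_cast cnt_sdiff G H (U ×ˢ Z) U (fun q hq => (Finset.mem_product.1 hq).1)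
    have e3 := hsum U hU
    have e4 : (1 - ε / 8) * (p * (U.card * (n / 3))) ≤ (1 - ε / 8) * (p * (U.card * Z.card)) := by
      refine mul_le_mul_of_nonneg_left ?_ (by linarith)
      gcongr
    have e5 : p * (U.card * (n / 3)) = (d * U.card) / 3 := by rw [hdp]; ring
    rw [e5] at e4
    have e6 : d * (β * n) ≤ d * U.card := by gcongr
    have e7 : ε * (d * (β * n)) ≤ ε * (d * U.card) := by gcongr
    nlinarith
  obtain ⟨R, hRF, hRc, hR⟩ := hitR (by omega) F d ε β hd hε hε3 hβ (by linarith) hEd hUZ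
  obtain ⟨Γ0, hΓ0F, hΓ0C, hΓ0R, hΓ0c⟩ := gamma0 F C k hCF (fun v => by rw [hCcard]; exact min_le_left _ _) R hRF
  set m := ⌈β * n⌉₊ with hm
  have hm1 : β * n ≤ m := Nat.le_ceil _
  have hm2 : (m : ℝ) < β * n + 1 := Nat.ceil_lt_add_one (by linarith)
  have hm3 : 1 ≤ m := by
    have : (1 : ℝ) ≤ m := by linarith
    exact_mod_cast this
  obtain ⟨Γ, hΓF, hΓc, A, hA, hAend, hAno, hno⟩ := core hn F Γ0 hΓ0F m hm3
    (by
      intro Γ h0 hΓF U hU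
      refine expansion G Γ (hΓF.trans hFG) d δ γ μ hd hγ hγδ h4 h5a h5b h5c h5d C
        (fun v w hw => h0 (hΓ0C v w hw)) hClow hChigh U ?_
      have : (U.card : ℝ) < β * n := Nat.lt_ceil.1 hU
      nlinarith)
    (by
      intro U Z hU hZ
      have e1 : (m : ℝ) ≤ U.card := by exact_mod_cast hU
      have e2 : (n : ℝ) ≤ 3 * Z.card := by exact_mod_cast hZ
      obtain ⟨q, hq, hq1, hq2⟩ := hR U Z (by linarith) (by linarith)
      exact ⟨q.1, hq1, q.2, hq2, hΓ0R q hq⟩) hF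
  have hA' : 2 * (n : ℝ) ≤ 3 * m + 6 * A.card := by exact_mod_cast hA
  have hβ48 : β ≤ 1 / 48 := by linarith
  have hβ48n : β * n ≤ 1 / 48 * n := by gcongr
  have hAn : n / 3 - β * n ≤ (A.card : ℝ) := by linarith
  have hSc := boost_card Γ A (n / 3 - 2 * (β * n)) (by
    intro v hv
    have e1 : 2 * (n : ℝ) ≤ 3 * m + 6 * (endSet Γ v).card := by exact_mod_cast hAend v hv
    linarith) (fun v w hw h => hno v w hw (hΓF h))
  have hG := h3 Γ (hΓF.trans hFG) (by
    have e1 : (Γ.edgeFinset.card : ℝ) ≤ n * k + R.card + n := by exact_mod_cast hΓc.trans (by omega)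
    have e2 : (n : ℝ) * k ≤ n * (δ * d + 1) := by gcongr
    linarith) (by
    refine le_trans ?_ hSc
    have e1 : (5 / 16 : ℝ) * n ≤ A.card := by linarith
    have e2 : (7 / 24 : ℝ) * n ≤ n / 3 - 2 * (β * n) := by linarith
    calc (n : ℝ) ^ 2 / 20 ≤ (5 / 16 * n) * (7 / 24 * n) := by nlinarith
      _ ≤ _ := by gcongr)
  have hz : cnt F (boostPairs Γ) = 0 := by
    unfold cnt
    rw [Finset.card_eq_zero, Finset.eq_empty_iff_forall_notMem]
    intro q hq
    rw [mem_cnt_filter] at hq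
    exact hno q.1 q.2 (mem_boostPairs.1 hq.1).2.2 hq.2
  have hcs := cnt_sdiff G H (boostPairs Γ) A (by
    intro q hq
    by_contra hqA
    have h := (mem_boostPairs.1 hq).2.2
    rw [hAno q.1 hqA] at h
    simp at h)
  rw [← hFd, hz, zero_add] at hcs
  have hcs' : (cnt G (boostPairs Γ) : ℝ) ≤ ∑ v ∈ A, (H.degree v : ℝ) := by exact_mod_cast hcs
  have hs := hsum A (by linarith)
  have e1 : (1 - ε / 8) * (p * (A.card * (n / 3 - 2 * (β * n)))) ≤ (1 - ε / 8) * (p * (boostPairs Γ).card) := by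
    refine mul_le_mul_of_nonneg_left ?_ (by linarith)
    gcongr
  have e2 : p * (A.card * (n / 3 - 2 * (β * n))) = (1 / 3 - 2 * β) * (d * A.card) := by rw [hdp]; ring
  rw [e2] at e1
  have hApos : (0 : ℝ) < A.card := by linarith
  have e3 : 0 < d * A.card := by positivity
  have e4 : (1 - ε / 8) * ((1 / 3 - 2 * β) * (d * A.card)) ≤ (1 / 3 - ε / 2) * (d * A.card) := by linarith
  have e5 : (1 - ε / 8) * (1 / 3 - 2 * β) ≤ 1 / 3 - ε / 2 := by
    rw [← mul_assoc] at e4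
    exact le_of_mul_le_mul_right e4 e3
  nlinarith


lemma mult_le_one {n : ℕ} (R T : Finset (Fin n)) (hRT : R ⊆ T) (e : Sym2 (Fin n)) :
    mult (R ×ˢ Tᶜ) e ≤ 1 := by
  unfold mult
  rw [Finset.card_le_one]
  rintro ⟨a, b⟩ h ⟨a', b'⟩ h'
  simp only [Finset.mem_filter, Finset.mem_product, Finset.mem_compl] at h h'
  have he := h.2.trans h'.2.symm
  rcases Sym2.eq_iff.1 he with ⟨h1, h2⟩ | ⟨h1, h2⟩
  · exact Prod.ext h1 h2
  · exfalso
    exact h'.1.2 (h1 ▸ hRT h.1.1)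

lemma exp_neg_two_le : Real.exp (-2) ≤ 0.14 := by
  have h7 := Real.exp_one_gt_d9
  have h2 : Real.exp 2 = Real.exp 1 * Real.exp 1 := by rw [← Real.exp_add]; norm_num
  have h3 : (7.38 : ℝ) ≤ Real.exp 2 := by rw [h2]; nlinarith
  rw [Real.exp_neg]
  calc (Real.exp 2)⁻¹ ≤ (7.38 : ℝ)⁻¹ := by gcongr
    _ ≤ 0.14 := by norm_num

lemma low_prob {n : ℕ} {p : ℝ} (h0 : 0 ≤ p) (h1 : p ≤ 1) (Γ : Finset (Sym2 (Fin n)))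
    (hΓ : Γ ⊆ allE n) (R T : Finset (Fin n)) (hRT : R ⊆ T) (hΓT : ∀ e ∈ Γ, ∀ v ∈ e, v ∈ T)
    (hT : T.card ≤ 5) (d : ℝ) (hdp : d = n * p) (hd : 200 ≤ d) :
    gnpProb n p (fun G => Γ ⊆ G.edgeFinset ∧ ∀ u ∈ R, Low G d u) ≤
      p ^ Γ.card * Real.exp (-(0.8 * (R.card * d))) := by
  have hS : ∀ q ∈ R ×ˢ Tᶜ, q.1 ≠ q.2 := by
    intro q hq h
    obtain ⟨h1, h2⟩ := Finset.mem_product.1 hq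
    exact Finset.mem_compl.1 h2 (h ▸ hRT h1)
  have hdj : ∀ q ∈ R ×ˢ Tᶜ, s(q.1, q.2) ∉ Γ := by
    intro q hq h
    obtain ⟨h1, h2⟩ := Finset.mem_product.1 hq
    exact Finset.mem_compl.1 h2 (hΓT _ h q.2 (Sym2.mem_mk_right _ _))
  refine (gnpProb_mono h0 h1 ?_).trans ((master_cnt_one h0 h1 Γ hΓ (R ×ˢ Tᶜ) hS hdj
    (mult_le_one R T hRT) 2 (R.card * (d / 100))).trans ?_)
  · rintro G ⟨hG, hl⟩
    refine ⟨hG, ?_⟩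
    have e1 : cnt G (R ×ˢ Tᶜ) ≤ cnt G (R ×ˢ Finset.univ) :=
      cnt_mono le_rfl (Finset.product_subset_product_right (Finset.subset_univ _))
    rw [cnt_prod_univ] at e1
    have e2 : (cnt G (R ×ˢ Tᶜ) : ℝ) ≤ ∑ v ∈ R, (G.degree v : ℝ) := by exact_mod_cast e1
    have e3 : (∑ v ∈ R, (G.degree v : ℝ)) ≤ ∑ v ∈ R, d / 100 :=
      Finset.sum_le_sum fun v hv => (hl v hv).le
    rw [Finset.sum_const, nsmul_eq_mul] at e3
    linarith
  · refine mul_le_mul_of_nonneg_left ?_ (pow_nonneg h0 _)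
    rw [Real.exp_le_exp, Finset.card_product]
    have hc : (n : ℝ) - 5 ≤ (Tᶜ.card : ℝ) := by
      have h : n ≤ Tᶜ.card + 5 := by
        rw [Finset.card_compl, Fintype.card_fin]; omega
      have : (n : ℝ) ≤ Tᶜ.card + 5 := by exact_mod_cast h
      linarith
    have e1 : d - 5 ≤ p * Tᶜ.card := by
      have := mul_le_mul_of_nonneg_left hc h0
      rw [hdp]; nlinarith
    have e2 : (0.86 : ℝ) ≤ 1 - Real.exp (-2) := by have := exp_neg_two_le; linarith
    have e3 : 0.86 * (d - 5) ≤ (1 - Real.exp (-2)) * (p * Tᶜ.card) :=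
      mul_le_mul e2 e1 (by linarith) (by linarith)
    have e4 : (R.card : ℝ) * (0.86 * (d - 5)) ≤ R.card * ((1 - Real.exp (-2)) * (p * Tᶜ.card)) := by gcongr
    have e5 : (0 : ℝ) ≤ R.card * (d - 200) := mul_nonneg (by positivity) (by linarith)
    have e6 : (0 : ℝ) ≤ R.card := by positivity
    push_cast
    nlinarith

lemma union_const {n : ℕ} {p : ℝ} (h0 : 0 ≤ p) (h1 : p ≤ 1) {ι : Type*} [Fintype ι]
    (s : Finset ι) (N : ℕ) (hN : Fintype.card ι = N) (B : SimpleGraph (Fin n) → Prop)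
    (A : ι → SimpleGraph (Fin n) → Prop) (b : ℝ) (hb : 0 ≤ b) (hB : ∀ G, B G → ∃ i ∈ s, A i G)
    (hA : ∀ i ∈ s, gnpProb n p (A i) ≤ b) : gnpProb n p B ≤ N * b := by
  refine (gnpProb_mono h0 h1 hB).trans ((gnpProb_union h0 h1 s A).trans ?_)
  refine (Finset.sum_le_sum hA).trans ?_
  rw [Finset.sum_const, nsmul_eq_mul]
  refine mul_le_mul_of_nonneg_right ?_ hb
  rw [← hN]
  exact_mod_cast Finset.card_le_univ s

lemma edge_mem {n : ℕ} {G : SimpleGraph (Fin n)} {a b : Fin n} (h : G.Adj a b) :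
    s(a, b) ∈ G.edgeFinset := by
  rw [SimpleGraph.mem_edgeFinset]; exact h

lemma mem_allE {n : ℕ} {a b : Fin n} (h : a ≠ b) : s(a, b) ∈ allE n := by
  unfold allE
  rw [SimpleGraph.mem_edgeFinset]; exact h

section q5
variable {n : ℕ} {p : ℝ}

lemma prob_Q5a (h0 : 0 ≤ p) (h1 : p ≤ 1) (d : ℝ) (hdp : d = n * p) (hd : 200 ≤ d) :
    gnpProb n p (fun G => ¬ Q5a G d) ≤ (n ^ 2 : ℕ) * (p ^ 1 * Real.exp (-(0.8 * (2 * d)))) := by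
  refine union_const h0 h1 (ι := Fin n × Fin n) (Finset.univ.filter (fun q => q.1 ≠ q.2)) (n ^ 2)
    (by simp [pow_succ]) _
    (fun q G => {s(q.1, q.2)} ⊆ G.edgeFinset ∧ ∀ u ∈ ({q.1, q.2} : Finset (Fin n)), Low G d u) _
    (by positivity) ?_ ?_
  · intro G hG
    unfold Q5a at hG
    push Not at hG
    obtain ⟨u, v, hu, hv, huv⟩ := hG
    refine ⟨(u, v), Finset.mem_filter.2 ⟨Finset.mem_univ _, huv.ne⟩, ?_, ?_⟩
    · intro e he
      rw [Finset.mem_singleton] at he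
      rw [he]; exact edge_mem huv
    · intro w hw
      simp only [Finset.mem_insert, Finset.mem_singleton] at hw
      rcases hw with rfl | rfl <;> assumption
  · rintro ⟨u, v⟩ hq
    have huv : u ≠ v := (Finset.mem_filter.1 hq).2
    refine (low_prob h0 h1 {s(u, v)} ?_ {u, v} {u, v} (Finset.Subset.refl _) ?_ ?_ d hdp hd).trans ?_
    · intro e he
      rw [Finset.mem_singleton] at he
      rw [he]; exact mem_allE huv
    · intro e he w hw
      rw [Finset.mem_singleton] at he
      subst he
      simpa using hw
    · exact (Finset.card_le_two).trans (by norm_num)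
    · rw [Finset.card_singleton, Finset.card_pair huv]
      norm_num

lemma prob_Q5b (h0 : 0 ≤ p) (h1 : p ≤ 1) (d : ℝ) (hdp : d = n * p) (hd : 200 ≤ d) :
    gnpProb n p (fun G => ¬ Q5b G d) ≤ (n ^ 3 : ℕ) * (p ^ 2 * Real.exp (-(0.8 * (2 * d)))) := by
  refine union_const h0 h1 (ι := Fin n × Fin n × Fin n)
    (Finset.univ.filter (fun q => q.1 ≠ q.2.1 ∧ q.1 ≠ q.2.2 ∧ q.2.1 ≠ q.2.2)) (n ^ 3)
    (by simp [pow_succ, mul_assoc]) _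
    (fun q G => {s(q.1, q.2.2), s(q.2.2, q.2.1)} ⊆ G.edgeFinset ∧
      ∀ u ∈ ({q.1, q.2.1} : Finset (Fin n)), Low G d u) _
    (by positivity) ?_ ?_
  · intro G hG
    unfold Q5b at hG
    push Not at hG
    obtain ⟨u, v, w, hu, hv, huv, h1, h2⟩ := hG
    refine ⟨(u, v, w), Finset.mem_filter.2 ⟨Finset.mem_univ _, huv, h1.ne, h2.ne.symm⟩, ?_, ?_⟩
    · intro e he
      simp only [Finset.mem_insert, Finset.mem_singleton] at he
      rcases he with rfl | rfl
      · exact edge_mem h1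
      · exact edge_mem h2
    · intro w hw
      simp only [Finset.mem_insert, Finset.mem_singleton] at hw
      rcases hw with rfl | rfl <;> assumption
  · rintro ⟨u, v, w⟩ hq
    obtain ⟨huv, huw, hvw⟩ := (Finset.mem_filter.1 hq).2
    simp only at huv huw hvw
    refine (low_prob h0 h1 {s(u, w), s(w, v)} ?_ {u, v} {u, v, w} ?_ ?_ ?_ d hdp hd).trans ?_
    · intro e he
      simp only [Finset.mem_insert, Finset.mem_singleton] at he
      rcases he with rfl | rfl
      · exact mem_allE huw
      · exact mem_allE hvw.symm
    · intro x hx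
      simp only [Finset.mem_insert, Finset.mem_singleton] at hx ⊢
      tauto
    · intro e he x hx
      simp only [Finset.mem_insert, Finset.mem_singleton] at he ⊢
      rcases he with rfl | rfl <;> simp only [Sym2.mem_iff] at hx <;> tauto
    · exact (Finset.card_le_three).trans (by norm_num)
    · rw [Finset.card_pair huv, Finset.card_pair]
      · norm_num
      · intro h
        rcases Sym2.eq_iff.1 h with ⟨h, _⟩ | ⟨h, _⟩
        · exact huw h
        · exact huv h

lemma prob_Q5c (h0 : 0 ≤ p) (h1 : p ≤ 1) (d : ℝ) (hdp : d = n * p) (hd : 200 ≤ d) :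
    gnpProb n p (fun G => ¬ Q5c G d) ≤ (n ^ 5 : ℕ) * (p ^ 4 * Real.exp (-(0.8 * (2 * d)))) := by
  refine union_const h0 h1 (ι := Fin n × Fin n × Fin n × Fin n × Fin n)
    (Finset.univ.filter (fun q => [q.1, q.2.1, q.2.2.1, q.2.2.2.1, q.2.2.2.2].Nodup)) (n ^ 5)
    (by simp [pow_succ, mul_assoc]) _
    (fun q G => {s(q.1, q.2.1), s(q.2.1, q.2.2.1), s(q.2.2.1, q.2.2.2.1), s(q.2.2.2.1, q.2.2.2.2)}
      ⊆ G.edgeFinset ∧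
      ∀ u ∈ ({q.1, q.2.2.2.2} : Finset (Fin n)), Low G d u) _
    (by positivity) ?_ ?_
  · intro G hG
    unfold Q5c at hG
    push Not at hG
    obtain ⟨u, v, a, w, b, hu, hv, huv, hab, hwu, hwv, hub, hav, h1, h2, h3, h4⟩ := hG
    refine ⟨(u, a, w, b, v), Finset.mem_filter.2 ⟨Finset.mem_univ _, ?_⟩, ?_, ?_⟩
    · have e1 := h1.ne
      have e2 := h2.ne
      have e3 := h3.ne
      have e4 := h4.ne
      simp only [List.nodup_cons, List.mem_cons, List.not_mem_nil, or_false, not_or, List.nodup_nil,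
        not_false_eq_true, and_true]
      refine ⟨⟨e1, hwu.symm, hub, huv⟩, ⟨e2, hab, hav⟩, ⟨e3, hwv⟩, e4⟩
    · intro e he
      simp only [Finset.mem_insert, Finset.mem_singleton] at he
      rcases he with rfl | rfl | rfl | rfl
      · exact edge_mem h1
      · exact edge_mem h2
      · exact edge_mem h3
      · exact edge_mem h4
    · intro w hw
      simp only [Finset.mem_insert, Finset.mem_singleton] at hw
      rcases hw with rfl | rfl <;> assumption
  · rintro ⟨u, a, w, b, v⟩ hq
    have hnd := (Finset.mem_filter.1 hq).2
    simp only [List.nodup_cons, List.mem_cons, List.not_mem_nil, or_false, not_or, List.nodup_nil,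
        not_false_eq_true, and_true] at hnd
    obtain ⟨⟨hua, huw, hub, huv⟩, ⟨haw, hab, hav⟩, ⟨hwb, hwv⟩, hbv⟩ := hnd
    refine (low_prob h0 h1 {s(u, a), s(a, w), s(w, b), s(b, v)} ?_ {u, v} {u, a, w, b, v} ?_ ?_ ?_ d hdp hd).trans ?_
    · intro e he
      simp only [Finset.mem_insert, Finset.mem_singleton] at he
      rcases he with rfl | rfl | rfl | rfl
      · exact mem_allE hua
      · exact mem_allE haw
      · exact mem_allE hwb
      · exact mem_allE hbv
    · intro x hx
      simp only [Finset.mem_insert, Finset.mem_singleton] at hx ⊢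
      tauto
    · intro e he x hx
      simp only [Finset.mem_insert, Finset.mem_singleton] at he ⊢
      rcases he with rfl | rfl | rfl | rfl <;> simp only [Sym2.mem_iff] at hx <;> tauto
    · exact Finset.card_le_five
    · rw [Finset.card_pair huv]
      have : ({s(u, a), s(a, w), s(w, b), s(b, v)} : Finset (Sym2 (Fin n))).card = 4 := by
        rw [Finset.card_insert_of_notMem, Finset.card_insert_of_notMem, Finset.card_insert_of_notMem,
          Finset.card_singleton]
        all_goals
          simp only [Finset.mem_insert, Finset.mem_singleton, Sym2.eq_iff]
          tauto
      rw [this]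
      norm_num

lemma prob_Q5d (h0 : 0 ≤ p) (h1 : p ≤ 1) (d : ℝ) (hdp : d = n * p) (hd : 200 ≤ d) :
    gnpProb n p (fun G => ¬ Q5d G d) ≤ (n ^ 4 : ℕ) * (p ^ 4 * Real.exp (-(0.8 * (1 * d)))) := by
  refine union_const h0 h1 (ι := Fin n × Fin n × Fin n × Fin n)
    (Finset.univ.filter (fun q => [q.1, q.2.1, q.2.2.1, q.2.2.2].Nodup)) (n ^ 4)
    (by simp [pow_succ, mul_assoc]) _
    (fun q G => {s(q.1, q.2.1), s(q.2.1, q.2.2.1), s(q.2.2.1, q.2.2.2), s(q.2.2.2, q.1)}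
      ⊆ G.edgeFinset ∧
      ∀ u ∈ ({q.1} : Finset (Fin n)), Low G d u) _
    (by positivity) ?_ ?_
  · intro G hG
    unfold Q5d at hG
    push Not at hG
    obtain ⟨u, a, w, b, hu, hab, hwu, h1, h2, h3, h4⟩ := hG
    refine ⟨(u, a, w, b), Finset.mem_filter.2 ⟨Finset.mem_univ _, ?_⟩, ?_, ?_⟩
    · have e1 := h1.ne
      have e2 := h2.ne
      have e3 := h3.ne
      have e4 := h4.ne
      simp only [List.nodup_cons, List.mem_cons, List.not_mem_nil, or_false, not_or, List.nodup_nil,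
        not_false_eq_true, and_true]
      refine ⟨⟨e1, hwu.symm, e4.symm⟩, ⟨e2, hab⟩, e3⟩
    · intro e he
      simp only [Finset.mem_insert, Finset.mem_singleton] at he
      rcases he with rfl | rfl | rfl | rfl
      · exact edge_mem h1
      · exact edge_mem h2
      · exact edge_mem h3
      · exact edge_mem h4
    · intro w hw
      simp only [Finset.mem_singleton] at hw
      rw [hw]; exact hu
  · rintro ⟨u, a, w, b⟩ hq
    have hnd := (Finset.mem_filter.1 hq).2
    simp only [List.nodup_cons, List.mem_cons, List.not_mem_nil, or_false, not_or, List.nodup_nil,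
        not_false_eq_true, and_true] at hnd
    obtain ⟨⟨hua, huw, hub⟩, ⟨haw, hab⟩, hwb⟩ := hnd
    refine (low_prob h0 h1 {s(u, a), s(a, w), s(w, b), s(b, u)} ?_ {u} {u, a, w, b} ?_ ?_ ?_ d hdp hd).trans ?_
    · intro e he
      simp only [Finset.mem_insert, Finset.mem_singleton] at he
      rcases he with rfl | rfl | rfl | rfl
      · exact mem_allE hua
      · exact mem_allE haw
      · exact mem_allE hwb
      · exact mem_allE (Ne.symm hub)
    · intro x hx
      simp only [Finset.mem_insert, Finset.mem_singleton] at hx ⊢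
      tauto
    · intro e he x hx
      simp only [Finset.mem_insert, Finset.mem_singleton] at he ⊢
      rcases he with rfl | rfl | rfl | rfl <;> simp only [Sym2.mem_iff] at hx <;> tauto
    · exact Finset.card_le_four.trans (by norm_num)
    · rw [Finset.card_singleton]
      have : ({s(u, a), s(a, w), s(w, b), s(b, u)} : Finset (Sym2 (Fin n))).card = 4 := by
        rw [Finset.card_insert_of_notMem, Finset.card_insert_of_notMem, Finset.card_insert_of_notMem,
          Finset.card_singleton]
        all_goals
          simp only [Finset.mem_insert, Finset.mem_singleton, Sym2.eq_iff]
          grind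
      rw [this]
      norm_num

end q5


/-- off-diagonal part -/
noncomputable def offd {n : ℕ} (S : Finset (Fin n × Fin n)) : Finset (Fin n × Fin n) :=
  S.filter (fun q => q.1 ≠ q.2)

lemma mem_offd {n : ℕ} {S : Finset (Fin n × Fin n)} {q : Fin n × Fin n} :
    q ∈ offd S ↔ q ∈ S ∧ q.1 ≠ q.2 := by
  unfold offd; rw [Finset.mem_filter]

lemma cnt_offd {n : ℕ} (G : SimpleGraph (Fin n)) (S : Finset (Fin n × Fin n)) :
    cnt G (offd S) = cnt G S := by
  unfold cnt
  congr 1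
  ext q
  rw [mem_cnt_filter, mem_cnt_filter, mem_offd]
  constructor
  · rintro ⟨⟨h, _⟩, h2⟩; exact ⟨h, h2⟩
  · rintro ⟨h, h2⟩; exact ⟨⟨h, h2.ne⟩, h2⟩

lemma card_offd_le {n : ℕ} (S : Finset (Fin n × Fin n)) : (offd S).card ≤ S.card :=
  Finset.card_le_card (Finset.filter_subset _ _)

lemma card_offd_ge {n : ℕ} (U Z : Finset (Fin n)) :
    U.card * Z.card ≤ (offd (U ×ˢ Z)).card + U.card := by
  rw [← Finset.card_product]
  have h : U ×ˢ Z ⊆ offd (U ×ˢ Z) ∪ U.image (fun u => (u, u)) := by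
    rintro ⟨a, b⟩ hq
    by_cases hab : a = b
    · refine Finset.mem_union_right _ (Finset.mem_image.2 ⟨a, (Finset.mem_product.1 hq).1, ?_⟩)
      rw [← hab]
    · exact Finset.mem_union_left _ (mem_offd.2 ⟨hq, hab⟩)
  refine (Finset.card_le_card h).trans ((Finset.card_union_le _ _).trans ?_)
  exact Nat.add_le_add_left Finset.card_image_le _

section q14
variable {n : ℕ} {p : ℝ}

lemma prob_Q1 (h0 : 0 ≤ p) (h1 : p ≤ 1) (hn : 2 ≤ n) (d η β : ℝ) (hdp : d = n * p)
    (hη : 0 < η) (hη1 : η ≤ 1) :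
    gnpProb n p (fun G => ¬ Q1 G d η β) ≤ (2 ^ n : ℕ) * Real.exp (-(β * η ^ 2 / 16 * (d * n))) := by
  have hn' : (2 : ℝ) ≤ n := by exact_mod_cast hn
  refine union_const h0 h1 (ι := Finset (Fin n)) (Finset.univ.filter (fun A => β * n ≤ A.card)) (2 ^ n)
    (by simp) _
    (fun A G => (1 + η) * (p * (offd (A ×ˢ Finset.univ)).card) ≤ (cnt G (offd (A ×ˢ Finset.univ)) : ℝ)) _
    (by positivity) ?_ ?_
  · intro G hG
    unfold Q1 at hG
    push Not at hG
    obtain ⟨A, hA, hlt⟩ := hG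
    refine ⟨A, Finset.mem_filter.2 ⟨Finset.mem_univ _, hA⟩, ?_⟩
    rw [cnt_offd]
    refine le_trans ?_ hlt.le
    have e := card_offd_le (A ×ˢ (Finset.univ : Finset (Fin n)))
    rw [Finset.card_product, Finset.card_univ, Fintype.card_fin] at e
    have e' : ((offd (A ×ˢ (Finset.univ : Finset (Fin n)))).card : ℝ) ≤ A.card * n := by exact_mod_cast e
    refine mul_le_mul_of_nonneg_left ?_ (by linarith)
    rw [hdp]
    calc p * _ ≤ p * (A.card * n) := by gcongr
      _ = _ := by ring
  · intro A hA
    have hA' := (Finset.mem_filter.1 hA).2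
    refine (tail_upper h0 h1 (offd (A ×ˢ Finset.univ)) (fun q hq => (mem_offd.1 hq).2) η hη hη1).trans ?_
    rw [Real.exp_le_exp]
    have e := card_offd_ge A (Finset.univ : Finset (Fin n))
    rw [Finset.card_univ, Fintype.card_fin] at e
    have e' : (A.card : ℝ) * n ≤ (offd (A ×ˢ (Finset.univ : Finset (Fin n)))).card + A.card := by exact_mod_cast e
    have e2 : β * n * n / 2 ≤ ((offd (A ×ˢ (Finset.univ : Finset (Fin n)))).card : ℝ) := by
      have : β * n * n ≤ A.card * n := by gcongr
      have : (A.card : ℝ) * 2 ≤ A.card * n := by gcongr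
      linarith
    have e3 : p * (β * n * n / 2) * (η ^ 2 / 8) ≤
        p * ((offd (A ×ˢ (Finset.univ : Finset (Fin n)))).card : ℝ) * (η ^ 2 / 8) := by gcongr
    rw [hdp]
    refine neg_le_neg (le_trans (le_of_eq ?_) e3)
    ring

lemma prob_Q2 (h0 : 0 ≤ p) (h1 : p ≤ 1) (hn : 8 ≤ n) (d η ν : ℝ) (hdp : d = n * p)
    (hη : 0 < η) (hη1 : η ≤ 1) (hν : 0 ≤ ν) (hnη : 8 / η ≤ n) :
    gnpProb n p (fun G => ¬ Q2 G p η ν) ≤ (4 ^ n : ℕ) * Real.exp (-(ν * η ^ 2 / 256 * (d * n))) := by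
  have hn' : (8 : ℝ) ≤ n := by exact_mod_cast hn
  have hnη' : 8 ≤ n * η := (div_le_iff₀ hη).1 hnη
  refine union_const h0 h1 (ι := Finset (Fin n) × Finset (Fin n))
    (Finset.univ.filter (fun A => ν * n ≤ A.1.card ∧ (n : ℝ) / 4 ≤ A.2.card)) (4 ^ n)
    (by simp [← mul_pow]) _
    (fun A G => ∅ ⊆ G.edgeFinset ∧ (cnt G (offd (A.1 ×ˢ A.2)) : ℝ) ≤ (1 - η / 2) * (p * (offd (A.1 ×ˢ A.2)).card)) _
    (by positivity) ?_ ?_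
  · intro G hG
    unfold Q2 at hG
    push Not at hG
    obtain ⟨U, Z, hU, hZ, hlt⟩ := hG
    refine ⟨(U, Z), Finset.mem_filter.2 ⟨Finset.mem_univ _, hU, hZ⟩, Finset.empty_subset _, ?_⟩
    change (cnt G (offd (U ×ˢ Z)) : ℝ) ≤ (1 - η / 2) * (p * (offd (U ×ˢ Z)).card)
    rw [cnt_offd]
    refine hlt.le.trans ?_
    have e' : (U.card : ℝ) * Z.card ≤ (offd (U ×ˢ Z)).card + U.card := by exact_mod_cast card_offd_ge U Z
    have e1 : (1 - η) * (U.card * Z.card) ≤ (1 - η / 2) * (U.card * Z.card - U.card) := by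
      have e2 : (1 : ℝ) ≤ η / 2 * Z.card := by nlinarith
      have e3 : (0 : ℝ) ≤ U.card := by positivity
      nlinarith [mul_nonneg e3 (sub_nonneg.2 e2)]
    have e2 : (1 - η / 2) * (U.card * Z.card - U.card) ≤ (1 - η / 2) * (offd (U ×ˢ Z)).card := by
      refine mul_le_mul_of_nonneg_left ?_ (by linarith)
      linarith
    have e3 := mul_le_mul_of_nonneg_left (e1.trans e2) h0
    linarith
  · rintro ⟨U, Z⟩ hA
    obtain ⟨hU, hZ⟩ := (Finset.mem_filter.1 hA).2
    change ν * n ≤ (U.card : ℝ) at hU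
    change (n : ℝ) / 4 ≤ (Z.card : ℝ) at hZ
    refine (tail_lower h0 h1 ∅ (Finset.empty_subset _) (offd (U ×ˢ Z)) (fun q hq => (mem_offd.1 hq).2)
      (by simp) (η / 2) (by linarith) (by linarith)).trans ?_
    rw [Finset.card_empty, pow_zero, one_mul, Real.exp_le_exp]
    have e' : (U.card : ℝ) * Z.card ≤ (offd (U ×ˢ Z)).card + U.card := by exact_mod_cast card_offd_ge U Z
    have e2 : ν * n * n / 8 ≤ ((offd (U ×ˢ Z)).card : ℝ) := by
      have e3 : ν * n * (n / 4) ≤ U.card * Z.card := by gcongr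
      have e4 : (U.card : ℝ) * 2 ≤ U.card * Z.card := by
        refine mul_le_mul_of_nonneg_left ?_ (by positivity)
        linarith
      linarith
    have e3 : p * (ν * n * n / 8) * ((η / 2) ^ 2 / 8) ≤
        p * ((offd (U ×ˢ Z)).card : ℝ) * ((η / 2) ^ 2 / 8) := by gcongr
    rw [hdp]
    refine neg_le_neg (le_trans (le_of_eq ?_) e3)
    ring

lemma sum_pow_graph (y : ℝ) :
    ∑ Γ : SimpleGraph (Fin n), y ^ Γ.edgeFinset.card = (1 + y) ^ (n.choose 2) := by
  rw [sum_graph_eq (fun T => y ^ T.card), ← card_allE, add_comm, ← Finset.sum_pow_mul_eq_add_pow]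
  refine Finset.sum_congr rfl fun T _ => ?_
  rw [one_pow, mul_one]

lemma prob_Q3 (h0 : 0 ≤ p) (h1 : p ≤ 1) (d η M L : ℝ) (hdp : d = n * p)
    (hη : 0 < η) (hη1 : η ≤ 1) (hL : 0 ≤ L) (hL2 : Real.exp (-L) ≤ η ^ 2 / 160)
    (hM : L * M ≤ η ^ 2 / 640 * (d * n)) :
    gnpProb n p (fun G => ¬ Q3 G p η M) ≤ Real.exp (-(η ^ 2 / 640 * (d * n))) := by
  set s : Finset (SimpleGraph (Fin n)) := Finset.univ.filter (fun Γ => (Γ.edgeFinset.card : ℝ) ≤ M ∧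
    (n : ℝ) ^ 2 / 20 ≤ (boostPairs Γ).card) with hs
  refine (gnpProb_mono h0 h1 (B := fun G => ∃ Γ ∈ s, Γ.edgeFinset ⊆ G.edgeFinset ∧
    (cnt G (boostPairs Γ) : ℝ) ≤ (1 - η) * (p * (boostPairs Γ).card)) ?_).trans
    ((gnpProb_union h0 h1 s (fun Γ G => Γ.edgeFinset ⊆ G.edgeFinset ∧
    (cnt G (boostPairs Γ) : ℝ) ≤ (1 - η) * (p * (boostPairs Γ).card))).trans ?_)
  · intro G hG
    unfold Q3 at hG
    push Not at hG
    obtain ⟨Γ, hΓ, hc, hb, hlt⟩ := hG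
    exact ⟨Γ, Finset.mem_filter.2 ⟨Finset.mem_univ _, hc, hb⟩, SimpleGraph.edgeFinset_mono hΓ, hlt.le⟩
  · have hone : ∀ Γ ∈ s, gnpProb n p (fun G => Γ.edgeFinset ⊆ G.edgeFinset ∧
        (cnt G (boostPairs Γ) : ℝ) ≤ (1 - η) * (p * (boostPairs Γ).card)) ≤
        (p * Real.exp (-L)) ^ Γ.edgeFinset.card *
          Real.exp (L * M - η ^ 2 / 160 * (d * n)) := by
      intro Γ hΓ
      obtain ⟨hc, hb⟩ := (Finset.mem_filter.1 hΓ).2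
      refine (tail_lower h0 h1 Γ.edgeFinset (edge_subset_allE Γ) (boostPairs Γ)
        (fun q hq => (mem_boostPairs.1 hq).1) ?_ η hη hη1).trans ?_
      · intro q hq h
        rw [SimpleGraph.mem_edgeFinset] at h
        exact (mem_boostPairs.1 hq).2.1 h
      · rw [mul_pow, mul_assoc (p ^ _)]
        refine mul_le_mul_of_nonneg_left ?_ (pow_nonneg h0 _)
        rw [← Real.exp_nat_mul, ← Real.exp_add, Real.exp_le_exp]
        have e1 : L * Γ.edgeFinset.card ≤ L * M := by gcongr
        have e2 : p * ((n : ℝ) ^ 2 / 20) * (η ^ 2 / 8) ≤ p * (boostPairs Γ).card * (η ^ 2 / 8) := by gcongr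
        have e3 : p * ((n : ℝ) ^ 2 / 20) * (η ^ 2 / 8) = η ^ 2 / 160 * (d * n) := by rw [hdp]; ring
        linarith
    refine (Finset.sum_le_sum hone).trans ?_
    rw [← Finset.sum_mul]
    have hy : 0 ≤ p * Real.exp (-L) := by positivity
    have e1 : ∑ Γ ∈ s, (p * Real.exp (-L)) ^ Γ.edgeFinset.card ≤
        Real.exp (d * n * (Real.exp (-L) / 2)) := by
      refine (Finset.sum_le_sum_of_subset_of_nonneg (Finset.subset_univ s)
        (fun Γ _ _ => pow_nonneg hy _)).trans ?_
      rw [sum_pow_graph]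
      have e2 : 1 + p * Real.exp (-L) ≤ Real.exp (p * Real.exp (-L)) := by
        have := Real.add_one_le_exp (p * Real.exp (-L)); linarith
      refine (pow_le_pow_left₀ (by positivity) e2 _).trans ?_
      rw [← Real.exp_nat_mul, Real.exp_le_exp]
      have e3 : (n.choose 2 : ℝ) ≤ n * n / 2 := by
        rw [Nat.cast_choose_two]
        have : (0 : ℝ) ≤ n := by positivity
        nlinarith
      calc (n.choose 2 : ℝ) * (p * Real.exp (-L)) ≤ n * n / 2 * (p * Real.exp (-L)) := by gcongr
        _ = _ := by rw [hdp]; ring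
    refine (mul_le_mul_of_nonneg_right e1 (Real.exp_pos _).le).trans ?_
    rw [← Real.exp_add, Real.exp_le_exp]
    have hdn : 0 ≤ d * n := by rw [hdp]; positivity
    have e4 : d * n * (Real.exp (-L) / 2) ≤ d * n * (η ^ 2 / 160 / 2) := by gcongr
    linarith

lemma prob_Q4 (h0 : 0 ≤ p) (h1 : p ≤ 1) (d γ μ lam : ℝ) (hdp : d = n * p) (hγ : 0 < γ)
    (hlam : 0 ≤ lam) (hμ : μ * Real.exp (2 * lam) ≤ γ) (hγl : 2 ≤ γ * (lam - 1 / 2))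
    (hnd : n * Real.exp (-d) ≤ 1) :
    gnpProb n p (fun G => ¬ Q4 G d γ μ) ≤ Real.exp (1 - d) := by
  have hd0 : 0 ≤ d := by rw [hdp]; positivity
  set s : Finset (Finset (Fin n)) := Finset.univ.filter (fun W => (W.card : ℝ) ≤ μ * n ∧ 1 ≤ W.card) with hs
  refine (gnpProb_mono h0 h1 (B := fun G => ∃ W ∈ s, γ * (d * W.card) ≤ (cnt G (offd (W ×ˢ W)) : ℝ)) ?_).trans
    ((gnpProb_union h0 h1 s (fun W G => γ * (d * W.card) ≤ (cnt G (offd (W ×ˢ W)) : ℝ))).trans ?_)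
  · intro G hG
    unfold Q4 at hG
    push Not at hG
    obtain ⟨W, hW, hlt⟩ := hG
    refine ⟨W, Finset.mem_filter.2 ⟨Finset.mem_univ _, hW, ?_⟩, ?_⟩
    · by_contra h
      have : W = ∅ := by
        rw [← Finset.card_eq_zero]; omega
      subst this
      simp [cnt] at hlt
    · rw [cnt_offd]; exact hlt.le
  · have hone : ∀ W ∈ s, gnpProb n p (fun G => γ * (d * W.card) ≤ (cnt G (offd (W ×ˢ W)) : ℝ)) ≤
        Real.exp (-d) ^ W.card * Real.exp (-d) := by
      intro W hW
      obtain ⟨hc, hb⟩ := (Finset.mem_filter.1 hW).2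
      have hb' : (1 : ℝ) ≤ W.card := by exact_mod_cast hb
      refine (tail_upper_gen h0 h1 (offd (W ×ˢ W)) (fun q hq => (mem_offd.1 hq).2) lam _ hlam).trans ?_
      rw [← Real.exp_nat_mul, ← Real.exp_add, Real.exp_le_exp]
      have e := card_offd_le (W ×ˢ W)
      rw [Finset.card_product] at e
      have e' : ((offd (W ×ˢ W)).card : ℝ) ≤ W.card * W.card := by exact_mod_cast e
      have hE1 : 0 ≤ Real.exp (2 * lam) - 1 := by
        have := Real.one_le_exp (x := 2 * lam) (by linarith); linarith
      have e2 : p * ((offd (W ×ˢ W)).card : ℝ) * ((Real.exp (2 * lam) - 1) / 2) ≤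
          p * (W.card * (μ * n)) * ((Real.exp (2 * lam) - 1) / 2) := by
        have : ((offd (W ×ˢ W)).card : ℝ) ≤ W.card * (μ * n) := e'.trans (by gcongr)
        gcongr
      have e3 : p * (W.card * (μ * n)) * ((Real.exp (2 * lam) - 1) / 2) =
          d * W.card * (μ * (Real.exp (2 * lam) - 1) / 2) := by rw [hdp]; ring
      have hμ0 : 0 ≤ μ := by
        by_contra hneg
        push Not at hneg
        have : μ * n ≤ 0 := mul_nonpos_of_nonpos_of_nonneg hneg.le (by positivity)
        linarith
      have hdW : 0 ≤ d * W.card := by positivity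
      have e4 : d * W.card * (μ * (Real.exp (2 * lam) - 1) / 2) ≤ d * W.card * (γ / 2) := by
        refine mul_le_mul_of_nonneg_left ?_ hdW
        linarith
      have e5 : d * W.card * 2 ≤ d * W.card * (γ * (lam - 1 / 2)) := by gcongr
      have e6 : d * 1 ≤ d * W.card := by gcongr
      linarith
    refine (Finset.sum_le_sum hone).trans ?_
    rw [← Finset.sum_mul]
    have e1 : ∑ W ∈ s, Real.exp (-d) ^ W.card ≤ Real.exp 1 := by
      refine (Finset.sum_le_sum_of_subset_of_nonneg (Finset.subset_univ s)
        (fun W _ _ => pow_nonneg (Real.exp_pos _).le _)).trans ?_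
      have e2 := Fintype.sum_pow_mul_eq_add_pow (Fin n) (Real.exp (-d)) 1
      simp only [one_pow, mul_one, Fintype.card_fin] at e2
      rw [e2]
      refine (pow_le_pow_left₀ (by positivity) (Real.add_one_le_exp (Real.exp (-d))) _).trans ?_
      rw [← Real.exp_nat_mul, Real.exp_le_exp]
      exact hnd
    refine (mul_le_mul_of_nonneg_right e1 (Real.exp_pos _).le).trans ?_
    rw [← Real.exp_add, ← sub_eq_add_neg]

end q14


lemma q5_aux (n : ℕ) (p d : ℝ) (h0 : 0 ≤ p) (hdp : d = n * p) (hd : 1 ≤ d) (hn : (n : ℝ) ≤ Real.exp d)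
    (j k : ℕ) (hj : k = j + 1) (hj4 : j ≤ 4) :
    ((n ^ k : ℕ) : ℝ) * (p ^ j * Real.exp (-(0.8 * (2 * d)))) ≤ d ^ 4 * Real.exp (-(0.6 * d)) := by
  subst hj
  have e1 : ((n ^ (j + 1) : ℕ) : ℝ) * (p ^ j * Real.exp (-(0.8 * (2 * d)))) =
      d ^ j * (n * Real.exp (-(0.8 * (2 * d)))) := by
    rw [hdp]; push_cast; ring
  rw [e1]
  have e2 : (n : ℝ) * Real.exp (-(0.8 * (2 * d))) ≤ Real.exp (-(0.6 * d)) := by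
    calc (n : ℝ) * Real.exp (-(0.8 * (2 * d))) ≤ Real.exp d * Real.exp (-(0.8 * (2 * d))) := by gcongr
      _ = _ := by rw [← Real.exp_add]; congr 1; ring
  have e3 : d ^ j ≤ d ^ 4 := pow_le_pow_right₀ hd hj4
  gcongr

lemma bad_or {n : ℕ} {p : ℝ} (h0 : 0 ≤ p) (h1 : p ≤ 1) (A B : SimpleGraph (Fin n) → Prop) (a b : ℝ)
    (hA : gnpProb n p (fun G => ¬ A G) ≤ a) (hB : gnpProb n p (fun G => ¬ B G) ≤ b) :
    gnpProb n p (fun G => ¬ (A G ∧ B G)) ≤ a + b := by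
  refine (gnpProb_mono h0 h1 ?_).trans ((gnpProb_or h0 h1 (fun G => ¬ A G) (fun G => ¬ B G)).trans
    (add_le_add hA hB))
  intro G h
  tauto

lemma pow_exp_le (n : ℕ) (b : ℕ) (x c y : ℝ) (hb : (b : ℝ) ≤ Real.exp x) (hc : x + 1 ≤ c * y) :
    ((b ^ n : ℕ) : ℝ) * Real.exp (-(c * (y * n))) ≤ Real.exp (-(n : ℝ)) := by
  push_cast
  calc (b : ℝ) ^ n * Real.exp (-(c * (y * n))) ≤ Real.exp x ^ n * Real.exp (-(c * (y * n))) := by gcongr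
    _ = Real.exp (n * x - c * (y * n)) := by rw [← Real.exp_nat_mul, ← Real.exp_add]; rfl
    _ ≤ _ := by
      rw [Real.exp_le_exp]
      have : (0 : ℝ) ≤ n := by positivity
      nlinarith [mul_nonneg this (sub_nonneg.2 hc)]

lemma d_facts (p : ℕ → ℝ)
    (hp : Tendsto (fun n : ℕ => n * p n - Real.log n - Real.log (Real.log n)) atTop atTop) :
    (∀ᶠ n : ℕ in atTop, Real.log n ≤ n * p n) ∧ Tendsto (fun n : ℕ => n * p n) atTop atTop := by
  have hlog : Tendsto (fun n : ℕ => Real.log n) atTop atTop :=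
    Real.tendsto_log_atTop.comp tendsto_natCast_atTop_atTop
  have h1 : ∀ᶠ n : ℕ in atTop, Real.log n ≤ n * p n := by
    filter_upwards [hlog.eventually_ge_atTop 1, hp.eventually_ge_atTop 0] with n h1 h2
    have := Real.log_nonneg h1
    linarith
  exact ⟨h1, tendsto_atTop_mono' _ h1 hlog⟩

set_option maxHeartbeats 4000000 in
/-- Theorem 1 (main theorem): w.h.p. `G ~ G(n,p)` is `d̃(np/100, ε)`-resilient with
respect to Hamiltonicity. -/
theorem stmt0_aux (ε : ℝ) (hε : 0 < ε) (p : ℕ → ℝ)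
    (hp0 : ∀ n, 0 ≤ p n) (hp1 : ∀ n, p n ≤ 1)
    (hp : Tendsto (fun n : ℕ => n * p n - Real.log n - Real.log (Real.log n)) atTop atTop) :
    WHP p (fun n G =>
      ∀ H : SimpleGraph (Fin n), H ≤ G →
        (∀ v : Fin n,
          ((G.degree v : ℝ) < n * p n / 100 → (H.degree v : ℝ) ≤ (G.degree v : ℝ) - 2) ∧
          ((n : ℝ) * p n / 100 ≤ (G.degree v : ℝ) →
            (H.degree v : ℝ) ≤ (1 / 3 - ε) * (G.degree v : ℝ))) →
        (G \ H).IsHamiltonian) := by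
  obtain ⟨hdlog, hdt⟩ := d_facts p hp
  obtain ⟨ε0, hε0, hε03, hε0ε⟩ : ∃ ε0 : ℝ, 0 < ε0 ∧ ε0 ≤ 1 / 3 ∧ ε0 ≤ ε :=
    ⟨min ε (1 / 3), lt_min hε (by norm_num), min_le_right _ _, min_le_left _ _⟩
  obtain ⟨η, hη⟩ : ∃ η, η = ε0 / 8 := ⟨_, rfl⟩
  have hη0 : 0 < η := by rw [hη]; positivity
  have hη1 : η ≤ 1 := by rw [hη]; linarith
  obtain ⟨L, hL0, hL⟩ : ∃ L : ℝ, 0 ≤ L ∧ Real.exp (-L) ≤ η ^ 2 / 160 := by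
    refine ⟨-Real.log (η ^ 2 / 160), ?_, ?_⟩
    · have : Real.log (η ^ 2 / 160) ≤ 0 := Real.log_nonpos (by positivity) (by nlinarith)
      linarith
    · rw [neg_neg, Real.exp_log (by positivity)]
  obtain ⟨δM, hδM0, hδM⟩ : ∃ δM : ℝ, 0 < δM ∧ L * δM ≤ η ^ 2 / 640 := by
    refine ⟨η ^ 2 / 640 / (L + 1), by positivity, ?_⟩
    rw [mul_div_assoc', div_le_iff₀ (by positivity)]
    nlinarith [sq_nonneg η]
  obtain ⟨δ, hδ0, hδ1, hδ2⟩ : ∃ δ : ℝ, 0 < δ ∧ δ ≤ δM / 2 ∧ δ ≤ 1 / 300 :=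
    ⟨min (δM / 2) (1 / 300), lt_min (by positivity) (by norm_num), min_le_left _ _, min_le_right _ _⟩
  obtain ⟨γ, hγ⟩ : ∃ γ, γ = δ / 7 := ⟨_, rfl⟩
  have hγ0 : 0 < γ := by rw [hγ]; positivity
  obtain ⟨lam, hlam0, hlam⟩ : ∃ lam : ℝ, 0 ≤ lam ∧ 2 ≤ γ * (lam - 1 / 2) := by
    refine ⟨2 / γ + 1 / 2, by positivity, ?_⟩
    rw [add_sub_cancel_right, mul_div_cancel₀ _ hγ0.ne']
  obtain ⟨μ, hμ0, hμ⟩ : ∃ μ : ℝ, 0 < μ ∧ μ * Real.exp (2 * lam) ≤ γ := by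
    refine ⟨γ / Real.exp (2 * lam), by positivity, ?_⟩
    rw [div_mul_cancel₀ _ (Real.exp_pos _).ne']
  obtain ⟨β, hβ0, hβ1, hβ2⟩ : ∃ β : ℝ, 0 < β ∧ β ≤ ε0 / 16 ∧ 6 * β ≤ μ := by
    refine ⟨min (ε0 / 16) (μ / 6), lt_min (by positivity) (by positivity), min_le_left _ _, ?_⟩
    have := min_le_right (ε0 / 16) (μ / 6)
    linarith
  have hnt : Tendsto (fun n : ℕ => (n : ℝ)) atTop atTop := tendsto_natCast_atTop_atTop
  set c1 := β * η ^ 2 / 16 with hc1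
  set c2 := β * ε0 * η ^ 2 / 256 with hc2
  have hc10 : 0 < c1 := by positivity
  have hc20 : 0 < c2 := by positivity
  have hmain : ∀ᶠ n : ℕ in atTop, gnpProb n (p n) (fun G => ¬ (∀ H : SimpleGraph (Fin n), H ≤ G →
        (∀ v : Fin n,
          ((G.degree v : ℝ) < n * p n / 100 → (H.degree v : ℝ) ≤ (G.degree v : ℝ) - 2) ∧
          ((n : ℝ) * p n / 100 ≤ (G.degree v : ℝ) →
            (H.degree v : ℝ) ≤ (1 / 3 - ε) * (G.degree v : ℝ))) →
        (G \ H).IsHamiltonian)) ≤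
      3 * Real.exp (-(n : ℝ)) + Real.exp (1 - n * p n) +
        4 * ((n * p n) ^ 4 * Real.exp (-(0.6 * (n * p n)))) := by
    filter_upwards [hdlog, eventually_ge_atTop 8, hnt.eventually_ge_atTop (8 / η),
      hnt.eventually_ge_atTop (1 / β), hdt.eventually_ge_atTop 200, hdt.eventually_ge_atTop (2 / δ),
      hdt.eventually_ge_atTop (2 / c1), hdt.eventually_ge_atTop (3 / c2),
      hdt.eventually_ge_atTop (1 / (η ^ 2 / 640)),
      hdt.eventually_ge_atTop ((3 + 2 / (ε0 * β / 8)) / (δM / 2))]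
      with n hlogd hn8 hnη hnβ hd200 hdδ hdc1 hdc2 hdη hdM
    obtain ⟨d, hd⟩ : ∃ d, d = n * p n := ⟨_, rfl⟩
    have h0 := hp0 n
    have h1 := hp1 n
    rw [← hd] at hlogd hd200 hdδ hdc1 hdc2 hdη hdM ⊢
    rw [div_le_iff₀ hδ0] at hdδ
    rw [div_le_iff₀ hc10] at hdc1
    rw [div_le_iff₀ hc20] at hdc2
    rw [div_le_iff₀ (by positivity)] at hdη hdM hnβ
    have hn0 : (8 : ℝ) ≤ n := by exact_mod_cast hn8
    have hnexp : (n : ℝ) ≤ Real.exp d := by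
      rw [← Real.log_le_iff_le_exp (by linarith)]; exact hlogd
    have hnd : n * Real.exp (-d) ≤ 1 := by
      rw [Real.exp_neg, ← div_eq_mul_inv, div_le_one (Real.exp_pos _)]; exact hnexp
    have hexp1 : (2 : ℝ) ≤ Real.exp 1 := by have := Real.add_one_le_exp (1 : ℝ); linarith
    have hexp2 : (4 : ℝ) ≤ Real.exp 2 := by
      have h2 : Real.exp 2 = Real.exp 1 * Real.exp 1 := by rw [← Real.exp_add]; norm_num
      rw [h2]; nlinarith
    have b1 := (prob_Q1 h0 h1 (by omega) d η β hd hη0 hη1).trans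
      (pow_exp_le n 2 1 c1 d (by exact_mod_cast hexp1) (by linarith))
    have b2 := (prob_Q2 h0 h1 hn8 d η (β * ε0) hd hη0 hη1 (by positivity) hnη).trans
      (pow_exp_le n 4 2 c2 d (by exact_mod_cast hexp2) (by linarith))
    have hdn : 0 ≤ d * n := by positivity
    have b3 := (prob_Q3 h0 h1 d η (δM * (d * n)) L hd hη0 hη1 hL0 hL (by
      rw [← mul_assoc]; exact mul_le_mul_of_nonneg_right hδM hdn)).trans
      (show Real.exp (-(η ^ 2 / 640 * (d * n))) ≤ Real.exp (-(n : ℝ)) by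
        rw [Real.exp_le_exp]
        nlinarith)
    have b4 := prob_Q4 h0 h1 d γ μ lam hd hγ0 hlam0 hμ hlam hnd
    have b5a := (prob_Q5a h0 h1 d hd hd200).trans
      (q5_aux n (p n) d h0 hd (by linarith) hnexp 1 2 rfl (by norm_num))
    have b5b := (prob_Q5b h0 h1 d hd hd200).trans
      (q5_aux n (p n) d h0 hd (by linarith) hnexp 2 3 rfl (by norm_num))
    have b5c := (prob_Q5c h0 h1 d hd hd200).trans
      (q5_aux n (p n) d h0 hd (by linarith) hnexp 4 5 rfl (by norm_num))
    have b5d : gnpProb n (p n) (fun G => ¬ Q5d G d) ≤ d ^ 4 * Real.exp (-(0.6 * d)) := by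
      refine (prob_Q5d h0 h1 d hd hd200).trans ?_
      have e : ((n ^ 4 : ℕ) : ℝ) * (p n ^ 4 * Real.exp (-(0.8 * (1 * d)))) =
        d ^ 4 * Real.exp (-(0.8 * d)) := by
        rw [hd]; push_cast; ring_nf
      rw [e]
      have : Real.exp (-(0.8 * d)) ≤ Real.exp (-(0.6 * d)) := by
        rw [Real.exp_le_exp]; linarith
      gcongr
    have hall := bad_or h0 h1 _ _ _ _ b1 (bad_or h0 h1 _ _ _ _ b2 (bad_or h0 h1 _ _ _ _ b3
      (bad_or h0 h1 _ _ _ _ b4 (bad_or h0 h1 _ _ _ _ b5a (bad_or h0 h1 _ _ _ _ b5b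
      (bad_or h0 h1 _ _ _ _ b5c b5d))))))
    refine (gnpProb_mono h0 h1 ?_).trans (hall.trans (by linarith))
    intro G hG hQ
    apply hG
    obtain ⟨q1, q2, q3, q4, q5a, q5b, q5c, q5d⟩ := hQ
    intro H hH hv
    rw [hη] at q1 q2 q3
    refine determ (by omega) G (p n) d ε0 β δ γ μ (δM * (d * n)) hd (by linarith) hε0 hε03 hβ0 hβ1
      (by linarith) (by linarith) (by nlinarith) hγ0 (by rw [hγ]; linarith) hβ2 ?_ q1 q2 q3 q4 q5a q5b q5c q5d
      H hH (fun v hl => (hv v).1 hl) ?_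
    · have e1 : δ * d ≤ δM / 2 * d := by gcongr
      have e2 : (n : ℝ) * (3 + 2 / (ε0 * β / 8)) ≤ n * (d * (δM / 2)) := by gcongr
      have e3 : (n : ℝ) * (δ * d) ≤ n * (δM / 2 * d) := by gcongr
      have e4 : 2 * (n : ℝ) / (ε0 * β / 8) = n * (2 / (ε0 * β / 8)) := by ring
      rw [e4]
      nlinarith
    · intro v hl
      refine ((hv v).2 (not_lt.1 hl)).trans ?_
      refine mul_le_mul_of_nonneg_right (by linarith) (by positivity)
  have hlim : Tendsto (fun n : ℕ => 3 * Real.exp (-(n : ℝ)) + Real.exp (1 - n * p n) +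
        4 * ((n * p n) ^ 4 * Real.exp (-(0.6 * (n * p n))))) atTop (nhds 0) := by
    have t1 : Tendsto (fun n : ℕ => Real.exp (-(n : ℝ))) atTop (nhds 0) :=
      Real.tendsto_exp_neg_atTop_nhds_zero.comp hnt
    have t2 : Tendsto (fun n : ℕ => Real.exp (1 - n * p n)) atTop (nhds 0) := by
      have := (Real.tendsto_exp_neg_atTop_nhds_zero.comp hdt).const_mul (Real.exp 1)
      rw [mul_zero] at this
      refine this.congr fun n => ?_
      simp only [Function.comp]
      rw [← Real.exp_add, sub_eq_add_neg]
    have t3 : Tendsto (fun n : ℕ => (n * p n) ^ 4 * Real.exp (-(0.6 * (n * p n)))) atTop (nhds 0) := by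
      have h06 : Tendsto (fun n : ℕ => 0.6 * (n * p n)) atTop atTop := hdt.const_mul_atTop (by norm_num)
      have := ((Real.tendsto_pow_mul_exp_neg_atTop_nhds_zero 4).comp h06).const_mul ((1 / 0.6) ^ 4)
      rw [mul_zero] at this
      refine this.congr fun n => ?_
      simp only [Function.comp]
      ring
    have := ((t1.const_mul 3).add t2).add (t3.const_mul 4)
    simpa using this
  unfold WHP
  have hlim1 := hlim.const_sub 1
  rw [sub_zero] at hlim1
  refine tendsto_of_tendsto_of_tendsto_of_le_of_le' hlim1 tendsto_const_nhds ?_ ?_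
  · filter_upwards [hmain] with n hn
    rw [gnpProb_compl]
    linarith
  · filter_upwards with n
    rw [gnpProb_compl]
    have := gnpProb_nonneg (hp0 n) (hp1 n) (fun G : SimpleGraph (Fin n) => ¬ (∀ H : SimpleGraph (Fin n), H ≤ G →
        (∀ v : Fin n,
          ((G.degree v : ℝ) < n * p n / 100 → (H.degree v : ℝ) ≤ (G.degree v : ℝ) - 2) ∧
          ((n : ℝ) * p n / 100 ≤ (G.degree v : ℝ) →
            (H.degree v : ℝ) ≤ (1 / 3 - ε) * (G.degree v : ℝ))) →
        (G \ H).IsHamiltonian))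
    linarith

/-- Theorem 1 (main theorem): w.h.p. `G ~ G(n,p)` is `d̃(np/100, ε)`-resilient with
respect to Hamiltonicity. -/
theorem stmt0 (ε : ℝ) (hε : 0 < ε) (p : ℕ → ℝ)
    (hp0 : ∀ n, 0 ≤ p n) (hp1 : ∀ n, p n ≤ 1)
    (hp : Tendsto (fun n : ℕ => n * p n - Real.log n - Real.log (Real.log n)) atTop atTop) :
    WHP p (fun n G =>
      ∀ H : SimpleGraph (Fin n), H ≤ G →
        (∀ v : Fin n,
          ((G.degree v : ℝ) < n * p n / 100 → (H.degree v : ℝ) ≤ (G.degree v : ℝ) - 2) ∧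
          ((n : ℝ) * p n / 100 ≤ (G.degree v : ℝ) →
            (H.degree v : ℝ) ≤ (1 / 3 - ε) * (G.degree v : ℝ))) →
        (G \ H).IsHamiltonian) := by
  exact stmt0_aux ε hε p hp0 hp1 hp
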